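/- Assume the Gaussian-basis model: fix v ∈ ℝ^N, let Y ∈ ℝ^{N×n} have first column v and remaining n−1 columns i.i.d. N(0, (1/N) I_N), let Q ∈ ℝ^{n×n} be an arbitrary orthogonal matrix, and observe Ỹ = YQ. Let ỹ_jᵀ be the j-th row of Ỹ, define M̃ := Σ_{i=1}^N (‖ỹ_i‖² − (n−1)/N) ỹ_i ỹ_iᵀ − (3/N) I_n, and let ũ be the unit leading eigenvector of M̃. There exist universal constants c > 0 and C > 0 such that: for any δ ∈ (0,1), if N ≥ log⁷(N/δ) and η/|‖v‖₄⁴ − 3/N| ≤ c (with η as in the spectral-norm proposition), then with probability at least 1−δ there is a single choice of sign s ∈ {±1} such that for all j ∈ [N], |s·ỹ_jᵀũ − v_j| ≤ (C·η/|‖v‖₄⁴ − 3/N|)·(|v_j| + √(log(N/δ))/√N). -/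

import Mathlib

open MeasureTheory ProbabilityTheory Matrix

/-- Euclidean norm of a vector in `ℝ^k`. -/
noncomputable def eucNorm {k : ℕ} (v : Fin k → ℝ) : ℝ := Real.sqrt (∑ i, (v i) ^ 2)

/-- ℓ_p norm of a vector in `ℝ^k`. -/
noncomputable def lpNorm {k : ℕ} (p : ℝ) (v : Fin k → ℝ) : ℝ := (∑ i, |v i| ^ p) ^ (1 / p)

/-- Supremum (ℓ_∞) norm of a vector in `ℝ^k`. -/
noncomputable def supNorm {k : ℕ} (v : Fin k → ℝ) : ℝ := ⨆ i, |v i|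

/-- The Gaussian measure `N(0, σ2 · I_k)` on `ℝ^k`. -/
noncomputable def gaussVec (k : ℕ) (σ2 : NNReal) : Measure (Fin k → ℝ) :=
  Measure.pi fun _ => gaussianReal 0 σ2

instance (k : ℕ) (σ2 : NNReal) : IsProbabilityMeasure (gaussVec k σ2) := by
  unfold gaussVec; infer_instance

/-- The law of `N` i.i.d. samples from `N(0, σ2 · I_k)`. -/
noncomputable def iidGaussVec (N k : ℕ) (σ2 : NNReal) : Measure (Fin N → Fin k → ℝ) :=
  Measure.pi fun _ => gaussVec k σ2

/-- Concatenation `(a, bᵀ)ᵀ ∈ ℝ^n` of a scalar `a` with a vector `b ∈ ℝ^{n-1}`. -/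
noncomputable def rowCat {n : ℕ} (a : ℝ) (b : Fin (n - 1) → ℝ) : Fin n → ℝ :=
  fun j => if h : (j : ℕ) = 0 then a else b ⟨(j : ℕ) - 1, by have := j.isLt; omega⟩

/-- The `N × n` matrix whose rows are `y_iᵀ = (v_i, b_iᵀ)`, i.e. whose first column is `v`
and whose remaining `n - 1` columns are given by `B`. -/
noncomputable def gaussBasis {N n : ℕ} (v : Fin N → ℝ) (B : Fin N → Fin (n - 1) → ℝ) :
    Matrix (Fin N) (Fin n) ℝ :=
  Matrix.of fun i => rowCat (v i) (B i)

/-- The matrix `M(Y) = ∑_i (‖y_i‖² - (n-1)/N) y_i y_iᵀ - (3/N) I_n` built from the rows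
`y_iᵀ` of `Y`. -/
noncomputable def specMat {N n : ℕ} (Y : Matrix (Fin N) (Fin n) ℝ) :
    Matrix (Fin n) (Fin n) ℝ :=
  (∑ i, ((∑ j, (Y i j) ^ 2) - ((n : ℝ) - 1) / N) • Matrix.vecMulVec (Y i) (Y i))
    - ((3 : ℝ) / N) • (1 : Matrix (Fin n) (Fin n) ℝ)

/-- `u` is a unit leading eigenvector of the (symmetric) matrix `M`: a unit eigenvector
whose eigenvalue has the largest absolute value among all eigenvalues of `M`. -/
def IsLeadingEigen {n : ℕ} (M : Matrix (Fin n) (Fin n) ℝ) (u : Fin n → ℝ) : Prop :=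
  eucNorm u = 1 ∧ ∃ μ : ℝ, M.mulVec u = μ • u ∧
    ∀ μ' : ℝ, (∃ w : Fin n → ℝ, w ≠ 0 ∧ M.mulVec w = μ' • w) → |μ'| ≤ |μ|

/-- The quantity `η = η(N, n, v, δ)` with universal constant `C`. -/
noncomputable def etaBound (C : ℝ) (N n : ℕ) (v : Fin N → ℝ) (δ : ℝ) : ℝ :=
  C * ((eucNorm v + 1) * n * Real.sqrt (Real.log (N / δ)) / (N : ℝ) ^ ((3 : ℝ) / 2)
    + lpNorm 4 v ^ 2 * Real.sqrt (n * Real.log (N / δ)) / N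
    + lpNorm 6 v ^ 3 * (Real.sqrt n + Real.sqrt (Real.log (N / δ))) / Real.sqrt N
    + supNorm v ^ 2 * (n * Real.log (N / δ) + (Real.log (N / δ)) ^ 2) / N
    + (n * Real.log (N / δ)) ^ ((3 : ℝ) / 2) / (N : ℝ) ^ 2
    + |eucNorm v ^ 2 - 1| / N)

/-!
Multiplying `Y` on the right by `Q` conjugates the spectral matrix, so it is enough to treat
`Q = 1`. Write the rows of `Y` as `(v_i, g_i)` and `β = ∑ v_i⁴ - 3/N`. On an event of probability
at least `1 - δ` the spectral matrix of `Y` is within `O(η)` of `diag(β, 0, …, 0)`: the top left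
entry, the off-diagonal block and the lower right block are sums of independent terms, which
Chernoff bounds control in each fixed direction once the squared lengths `‖g_i‖²` have been
truncated, and a net of the sphere makes the bounds uniform. Hence a leading eigenvector
`u = (u₀, w)` has `|u₀|` close to `1` and `‖w‖ = O(η / |β|)`, and the entry `j` of `Y u` is
`u₀ v_j + ⟨g_j, w⟩`.

The inner product `⟨g_j, w⟩` gains a factor `√(log (N/δ) / N)` over the Cauchy-Schwarz bound.
The eigenvalue equation is rewritten with the contribution of row `j` removed from the off-diagonal
and lower right blocks. Solving it by a Neumann series expresses `w` through the Krylov vectors of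
the remaining rows, which are independent of `g_j`, plus a multiple of the series applied to `g_j`
itself, whose coefficient is proportional to the entry `j` of `Y u`. So `⟨g_j, w⟩` is bounded by
`O(η / |β|)` times the sum of `√(log (N/δ) / N)` and that entry, which can be absorbed. The series
is stopped after `N` terms, where the crude bound `‖g_j‖ ≤ 4^N √(log (N/δ) / N)` is compensated by
the geometric decay of the remainder.
-/

namespace GaussBasis

/-! ### Exponential moments -/

section ExponentialMoments

variable {α : Type*} [MeasurableSpace α] {μ : Measure α} {f : α → ℝ} {θ V : ℝ}

/-- The moment generating function of `f` exists at `θ` and is at most `exp (θ² V)`. In contrast to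
`HasSubgaussianMGF` this is a condition at a single `θ`, so that it also covers sub-exponential
variables, for which the bound only holds near `0`. -/
def HasMGFBound (μ : Measure α) (f : α → ℝ) (θ V : ℝ) : Prop :=
  Integrable (fun x => Real.exp (θ * f x)) μ ∧ mgf f μ θ ≤ Real.exp (θ ^ 2 * V)

lemma HasMGFBound.mono {V' : ℝ} (h : HasMGFBound μ f θ V) (hV : V ≤ V') :
    HasMGFBound μ f θ V' :=
  ⟨h.1, h.2.trans (Real.exp_le_exp.2 (mul_le_mul_of_nonneg_left hV (sq_nonneg θ)))⟩

lemma HasMGFBound.const_mul {c : ℝ} (h : HasMGFBound μ f (θ * c) V) :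
    HasMGFBound μ (fun x => c * f x) θ (c ^ 2 * V) := by
  simpa only [HasMGFBound, mgf, mul_assoc, mul_pow] using h

lemma HasMGFBound.neg (h : HasMGFBound μ f (-θ) V) : HasMGFBound μ (fun x => -f x) θ V := by
  simpa only [HasMGFBound, mgf, mul_neg, neg_mul, neg_sq] using h

lemma hasMGFBound_sum {ι : Type*} [Fintype ι] [SigmaFinite μ] {f : ι → α → ℝ} {V : ι → ℝ}
    (h : ∀ i, HasMGFBound μ (f i) θ (V i)) :
    HasMGFBound (Measure.pi fun _ : ι => μ) (fun x => ∑ i, f i (x i)) θ (∑ i, V i) := by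
  have exp_sum_eq_prod (x : ι → α) :
      Real.exp (θ * ∑ i, f i (x i)) = ∏ i, Real.exp (θ * f i (x i)) := by
    rw [Finset.mul_sum, Real.exp_sum]
  simp only [HasMGFBound, mgf, exp_sum_eq_prod]
  refine ⟨Integrable.fintype_prod (f := fun i y => Real.exp (θ * f i y)) fun i => (h i).1, ?_⟩
  rw [integral_fintype_prod_eq_prod (f := fun i y => Real.exp (θ * f i y)), Finset.mul_sum,
    Real.exp_sum]
  exact Finset.prod_le_prod (fun i _ => integral_nonneg fun x => (Real.exp_pos _).le)
    fun i _ => (h i).2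

lemma HasMGFBound.measureReal_ge_le [IsFiniteMeasure μ] {t p : ℝ} (ht : 0 < t) (hp : 0 < p)
    (hV : 4 * p * V ≤ t ^ 2) (h : HasMGFBound μ f (2 * p / t) V) :
    μ.real {x | t ≤ f x} ≤ Real.exp (-p) := by
  have hθ : 0 < 2 * p / t := by positivity
  have exponent_le : -(2 * p / t) * t + (2 * p / t) ^ 2 * V ≤ -p := by
    have e1 : -(2 * p / t) * t = -(2 * p) := by field_simp
    have e2 : (2 * p / t) ^ 2 * V = p * (4 * p * V / t ^ 2) := by field_simp; ring
    have e3 : 4 * p * V / t ^ 2 ≤ 1 := (div_le_one (by positivity)).2 hV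
    rw [e1, e2]
    nlinarith
  calc μ.real {x | t ≤ f x}
      ≤ Real.exp (-(2 * p / t) * t) * mgf f μ (2 * p / t) :=
        measure_ge_le_exp_mul_mgf t hθ.le h.1
    _ ≤ Real.exp (-(2 * p / t) * t) * Real.exp ((2 * p / t) ^ 2 * V) := by gcongr; exact h.2
    _ ≤ Real.exp (-p) := by rw [← Real.exp_add]; exact Real.exp_le_exp.2 exponent_le

lemma measure_abs_ge_le_of_hasMGFBound [IsFiniteMeasure μ] {t p : ℝ} (ht : 0 < t) (hp : 0 < p)
    (hV : 4 * p * V ≤ t ^ 2) (h : ∀ θ, |θ| = 2 * p / t → HasMGFBound μ f θ V) :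
    μ {x | t ≤ |f x|} ≤ ENNReal.ofReal (2 * Real.exp (-p)) := by
  have hθ : 0 < 2 * p / t := by positivity
  have upper := (h _ (abs_of_pos hθ)).measureReal_ge_le ht hp hV
  have lower := (h (-(2 * p / t)) (by rw [abs_neg, abs_of_pos hθ])).neg.measureReal_ge_le ht hp hV
  have two_tails : {x | t ≤ |f x|} ⊆ {x | t ≤ f x} ∪ {x | t ≤ -f x} := by
    intro x hx
    exact (le_abs.1 (show t ≤ |f x| from hx)).imp id id
  rw [← ofReal_measureReal]
  refine ENNReal.ofReal_le_ofReal ((measureReal_mono two_tails).trans ?_)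
  linarith [measureReal_union_le (μ := μ) {x | t ≤ f x} {x | t ≤ -f x}]

lemma measure_abs_sum_ge_le {ι : Type*} [Fintype ι] [IsProbabilityMeasure μ] {f : ι → α → ℝ}
    {V : ι → ℝ} {t p : ℝ} (ht : 0 < t) (hp : 0 < p) (hV : 4 * p * ∑ i, V i ≤ t ^ 2)
    (h : ∀ i θ, |θ| = 2 * p / t → HasMGFBound μ (f i) θ (V i)) :
    (Measure.pi fun _ : ι => μ) {x | t ≤ |∑ i, f i (x i)|} ≤
      ENNReal.ofReal (2 * Real.exp (-p)) :=
  measure_abs_ge_le_of_hasMGFBound ht hp hV fun θ hθ => hasMGFBound_sum fun i => h i θ hθ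

lemma integral_pow_four_le_of_hasMGFBound (hf : Measurable f) (hθ : 0 < θ)
    (h1 : HasMGFBound μ f θ V) (h2 : HasMGFBound μ f (-θ) V) :
    Integrable (fun x => f x ^ 4) μ ∧ ∫ x, f x ^ 4 ∂μ ≤ 48 / θ ^ 4 * Real.exp (θ ^ 2 * V) := by
  have pow_four_le (x : α) :
      f x ^ 4 ≤ 24 / θ ^ 4 * (Real.exp (θ * f x) + Real.exp (-θ * f x)) := by
    have h3 := Real.pow_div_factorial_le_exp |θ * f x| (abs_nonneg _) 4
    have h4 := Real.exp_abs_le (θ * f x)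
    rw [Even.pow_abs (by decide), mul_pow, div_le_iff₀ (by positivity)] at h3
    norm_num [Nat.factorial, -abs_mul] at h3
    rw [div_mul_eq_mul_div, le_div_iff₀ (by positivity), neg_mul]
    linarith
  have hi : Integrable (fun x => 24 / θ ^ 4 * (Real.exp (θ * f x) + Real.exp (-θ * f x))) μ :=
    (h1.1.add h2.1).const_mul _
  have hi4 : Integrable (fun x => f x ^ 4) μ := by
    refine hi.mono' (by fun_prop) (.of_forall fun x => ?_)
    rw [Real.norm_eq_abs, abs_of_nonneg (by positivity)]
    exact pow_four_le x
  refine ⟨hi4, ?_⟩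
  have h3 : mgf f μ (-θ) ≤ Real.exp (θ ^ 2 * V) := by simpa only [neg_sq] using h2.2
  calc ∫ x, f x ^ 4 ∂μ
      ≤ ∫ x, 24 / θ ^ 4 * (Real.exp (θ * f x) + Real.exp (-θ * f x)) ∂μ :=
        integral_mono hi4 hi pow_four_le
    _ = 24 / θ ^ 4 * (mgf f μ θ + mgf f μ (-θ)) := by
        rw [integral_const_mul, integral_add h1.1 h2.1, mgf, mgf]
    _ ≤ 24 / θ ^ 4 * (Real.exp (θ ^ 2 * V) + Real.exp (θ ^ 2 * V)) := by gcongr; exact h1.2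
    _ = 48 / θ ^ 4 * Real.exp (θ ^ 2 * V) := by ring

end ExponentialMoments

/-! ### Bernstein's moment condition -/

section Bernstein

variable {α : Type*} [MeasurableSpace α] {μ : Measure α} [IsProbabilityMeasure μ]
  {Z G : α → ℝ} {θ V : ℝ}

lemma exp_le_one_add_add_sq_mul_exp_abs (z : ℝ) :
    Real.exp z ≤ 1 + z + z ^ 2 * Real.exp |z| := by
  have h := Complex.norm_exp_sub_sum_le_norm_mul_exp (z : ℂ) 2
  simp only [← Complex.ofReal_exp, Finset.sum_range_succ, Finset.sum_range_zero, pow_zero,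
    Nat.factorial, pow_one] at h
  norm_num at h
  have h2 : ‖((Real.exp z - (1 + z) : ℝ) : ℂ)‖ ≤ z ^ 2 * Real.exp |z| := by
    push_cast; exact_mod_cast h
  rw [Complex.norm_real] at h2
  linarith [(le_abs_self _).trans h2]

lemma integrable_of_sq_le (hZ : Measurable Z) (hG : Integrable G μ) (hZG : ∀ x, Z x ^ 2 ≤ G x) :
    Integrable Z μ := by
  refine ((integrable_const (1 : ℝ)).add hG).mono' hZ.aestronglyMeasurable (.of_forall fun x => ?_)
  have := hZG x
  rw [Real.norm_eq_abs, Pi.add_apply]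
  rw [← sq_abs] at this
  nlinarith [sq_nonneg (|Z x| - 1), abs_nonneg (Z x)]

lemma mgf_le_of_sq_mul_exp_le (hZ : Integrable Z μ) (hG : Integrable G μ)
    (hZG : ∀ x, Z x ^ 2 * Real.exp |θ * Z x| ≤ G x) :
    Integrable (fun x => Real.exp (θ * Z x)) μ ∧
      mgf Z μ θ ≤ 1 + θ * ∫ x, Z x ∂μ + θ ^ 2 * ∫ x, G x ∂μ := by
  have exp_le (x : α) : Real.exp (θ * Z x) ≤ 1 + θ * Z x + θ ^ 2 * G x := by
    have h1 := exp_le_one_add_add_sq_mul_exp_abs (θ * Z x)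
    have h2 := mul_le_mul_of_nonneg_left (hZG x) (sq_nonneg θ)
    nlinarith
  have hlin : Integrable (fun x => 1 + θ * Z x) μ := (integrable_const 1).add (hZ.const_mul θ)
  have hexp : Integrable (fun x => Real.exp (θ * Z x)) μ := by
    refine (hlin.add (hG.const_mul (θ ^ 2))).mono' (by fun_prop) (.of_forall fun x => ?_)
    rw [Real.norm_eq_abs, Real.abs_exp]
    exact exp_le x
  refine ⟨hexp, (integral_mono hexp (hlin.add (hG.const_mul _)) exp_le).trans_eq ?_⟩
  simp only [Pi.add_apply]
  rw [integral_add hlin (hG.const_mul _), integral_add (integrable_const 1) (hZ.const_mul θ),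
    integral_const_mul, integral_const_mul]
  simp

lemma hasMGFBound_sub_integral (hZ : Measurable Z) (hG : Integrable G μ)
    (hZG : ∀ x, Z x ^ 2 * Real.exp |θ * Z x| ≤ G x) (hV : ∫ x, G x ∂μ ≤ V) :
    HasMGFBound μ (fun x => Z x - ∫ y, Z y ∂μ) θ V := by
  have hZi := integrable_of_sq_le hZ hG fun x =>
    (le_mul_of_one_le_right (sq_nonneg _) (Real.one_le_exp (abs_nonneg _))).trans (hZG x)
  obtain ⟨hexp, hmgf⟩ := mgf_le_of_sq_mul_exp_le hZi hG hZG
  set m := ∫ y, Z y ∂μ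
  have exp_sub_eq (x : α) :
      Real.exp (θ * (Z x - m)) = Real.exp (-(θ * m)) * Real.exp (θ * Z x) := by
    rw [← Real.exp_add]; ring_nf
  simp only [HasMGFBound, mgf, exp_sub_eq]
  refine ⟨hexp.const_mul _, ?_⟩
  rw [integral_const_mul]
  calc Real.exp (-(θ * m)) * mgf Z μ θ
      ≤ Real.exp (-(θ * m)) * Real.exp (θ * m + θ ^ 2 * V) := by
        have := mul_le_mul_of_nonneg_left hV (sq_nonneg θ)
        gcongr
        linarith [Real.add_one_le_exp (θ * m + θ ^ 2 * V)]
    _ = Real.exp (θ ^ 2 * V) := by rw [← Real.exp_add]; ring_nf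

lemma sq_mul_le_pow_four_div_add {m : ℝ} (hm : 0 < m) (a b : ℝ) :
    a ^ 2 * b ≤ (a ^ 4 / m + m * b ^ 2) / 2 := by
  have h1 : 0 ≤ (a ^ 2 - m * b) ^ 2 / (2 * m) := by positivity
  have h2 : (a ^ 2 - m * b) ^ 2 / (2 * m) = (a ^ 4 / m + m * b ^ 2) / 2 - a ^ 2 * b := by
    field_simp
    ring
  linarith

/-- The arithmetic-geometric mean inequality separates a factor `ρ`, dominated by `r` with
controlled fourth moment, from a factor `Y` with controlled exponential moments. -/
lemma hasMGFBound_mul_sub_integral {ρ r Y : α → ℝ} {m : ℝ} (hm : 0 < m) (hρ : Measurable ρ)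
    (hY : Measurable Y) (hρr : ∀ x, |ρ x| ≤ |r x|) (hr : Integrable (fun x => r x ^ 4) μ)
    (hG : Integrable G μ) (hYG : ∀ x, Y x ^ 4 * Real.exp (2 * |θ * (ρ x * Y x)|) ≤ G x)
    (hV : (∫ x, r x ^ 4 ∂μ) / m + m * ∫ x, G x ∂μ ≤ 2 * V) :
    HasMGFBound μ (fun x => ρ x * Y x - ∫ y, ρ y * Y y ∂μ) θ V := by
  have hi : Integrable (fun x => r x ^ 4 / m + m * G x) μ := (hr.div_const m).add (hG.const_mul m)
  refine hasMGFBound_sub_integral (G := fun x => (r x ^ 4 / m + m * G x) / 2) (by fun_prop)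
    (hi.div_const 2) (fun x => ?_) ?_
  · set X := Y x ^ 2 * Real.exp |θ * (ρ x * Y x)| with hX
    have X_sq : X ^ 2 = Y x ^ 4 * Real.exp (2 * |θ * (ρ x * Y x)|) := by
      rw [hX, mul_pow, ← pow_mul, ← Real.exp_nat_mul, Nat.cast_ofNat]
    calc (ρ x * Y x) ^ 2 * Real.exp |θ * (ρ x * Y x)| = ρ x ^ 2 * X := by rw [hX]; ring
      _ ≤ r x ^ 2 * X := by
          exact mul_le_mul_of_nonneg_right (sq_le_sq.2 (hρr x)) (by positivity)
      _ ≤ (r x ^ 4 / m + m * X ^ 2) / 2 := sq_mul_le_pow_four_div_add hm _ _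
      _ ≤ (r x ^ 4 / m + m * G x) / 2 := by rw [X_sq]; gcongr; exact hYG x
  · rw [integral_div, integral_add (hr.div_const m) (hG.const_mul m), integral_div,
      integral_const_mul]
    linarith

end Bernstein

/-! ### Square-exponential moments -/

/-- `h` is measurable with `E exp (h² / (4 s)) ≤ 2`: a sub-Gaussian condition which does not
require `h` to be centred. -/
structure HasExpSqBound {α : Type*} [MeasurableSpace α] (μ : Measure α) (h : α → ℝ) (s : ℝ) :
    Prop where
  pos : 0 < s
  measurable : Measurable h
  integrable : Integrable (fun x => Real.exp (h x ^ 2 / (4 * s))) μ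
  integral_le : ∫ x, Real.exp (h x ^ 2 / (4 * s)) ∂μ ≤ 2

namespace HasExpSqBound

variable {α : Type*} [MeasurableSpace α] {μ : Measure α} {h : α → ℝ} {s θ : ℝ}

lemma of_sq_div_le {f : α → ℝ} {t : ℝ} (H : HasExpSqBound μ h s) (hf : Measurable f) (ht : 0 < t)
    (hle : ∀ x, f x ^ 2 / (4 * t) ≤ h x ^ 2 / (4 * s)) : HasExpSqBound μ f t := by
  have exp_le (x : α) := Real.exp_le_exp.2 (hle x)
  have hint : Integrable (fun x => Real.exp (f x ^ 2 / (4 * t))) μ := by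
    refine H.integrable.mono' (by fun_prop) (.of_forall fun x => ?_)
    rw [Real.norm_eq_abs, Real.abs_exp]
    exact exp_le x
  exact ⟨ht, hf, hint, (integral_mono hint H.integrable exp_le).trans H.integral_le⟩

lemma mono {t : ℝ} (H : HasExpSqBound μ h s) (hst : s ≤ t) : HasExpSqBound μ h t := by
  have hs := H.pos
  exact H.of_sq_div_le H.measurable (by linarith) fun x => by gcongr

lemma bounded_mul {ρ : α → ℝ} {τ : ℝ} (H : HasExpSqBound μ h s) (hρ : Measurable ρ) (hτ : 0 < τ)
    (hρτ : ∀ x, |ρ x| ≤ τ) : HasExpSqBound μ (fun x => ρ x * h x) (τ ^ 2 * s) := by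
  have hs := H.pos
  refine H.of_sq_div_le (hρ.mul H.measurable) (by positivity) fun x => ?_
  have h1 : ρ x ^ 2 ≤ τ ^ 2 := by rw [← sq_abs]; gcongr; exact hρτ x
  calc (ρ x * h x) ^ 2 / (4 * (τ ^ 2 * s)) ≤ (τ ^ 2 * h x ^ 2) / (4 * (τ ^ 2 * s)) := by
        rw [mul_pow]; gcongr
    _ = h x ^ 2 / (4 * s) := by field_simp

lemma comp_map {β : Type*} [MeasurableSpace β] {X : β → α} {ν : Measure β}
    (H : HasExpSqBound (ν.map X) h s) (hX : Measurable X) :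
    HasExpSqBound ν (fun y => h (X y)) s := by
  have hm := H.measurable
  refine ⟨H.pos, hm.comp hX, H.integrable.comp_measurable hX, ?_⟩
  rw [← integral_map (f := fun x => Real.exp (h x ^ 2 / (4 * s))) hX.aemeasurable (by fun_prop)]
  exact H.integral_le

lemma exp_le_add_exp_sq (z : ℝ) : Real.exp z ≤ z + Real.exp (z ^ 2) := by
  have h2 := Real.add_one_le_exp (z ^ 2)
  rcases le_or_gt |z| 1 with h | h
  · linarith [(abs_le.1 (Real.abs_exp_sub_one_sub_id_le h)).2]
  · rcases lt_abs.1 h with h | h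
    · linarith [Real.exp_le_exp.2 (show z ≤ z ^ 2 by nlinarith)]
    · nlinarith [Real.exp_le_one_iff.2 (show z ≤ 0 by linarith)]

lemma exp_mul_le {q w : ℝ} (hq0 : 0 ≤ q) (hq1 : q ≤ 1) :
    Real.exp (q * w) ≤ 1 - q + q * Real.exp w := by
  have h := convexOn_exp.2 (Set.mem_univ (0 : ℝ)) (Set.mem_univ w) (sub_nonneg.2 hq1) hq0 (by ring)
  simpa only [smul_eq_mul, mul_zero, zero_add, Real.exp_zero, mul_one] using h

lemma sq_pow_mul_exp_le (hs : 0 < s) (k : ℕ) (y : ℝ) :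
    (y ^ 2) ^ k * Real.exp (y ^ 2 / (8 * s)) ≤
      k.factorial * (8 * s) ^ k * Real.exp (y ^ 2 / (4 * s)) := by
  set z := y ^ 2 / (8 * s) with hz
  have pow_le : z ^ k ≤ k.factorial * Real.exp z := by
    rw [← div_le_iff₀' (by positivity)]
    exact Real.pow_div_factorial_le_exp z (by positivity) k
  have y_sq : y ^ 2 = 8 * s * z := by rw [hz]; field_simp
  have exp_double : Real.exp (y ^ 2 / (4 * s)) = Real.exp z * Real.exp z := by
    rw [← Real.exp_add, hz]; congr 1; field_simp; ring
  rw [exp_double, y_sq, mul_pow]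
  calc (8 * s) ^ k * z ^ k * Real.exp z
      ≤ (8 * s) ^ k * (k.factorial * Real.exp z) * Real.exp z := by gcongr
    _ = _ := by ring

lemma integrable_sq_pow (H : HasExpSqBound μ h s) (k : ℕ) :
    Integrable (fun x => (h x ^ 2) ^ k) μ := by
  have hm := H.measurable
  refine (H.integrable.const_mul (k.factorial * (8 * s) ^ k)).mono' (by fun_prop)
    (.of_forall fun x => ?_)
  have hs := H.pos
  rw [Real.norm_eq_abs, abs_of_nonneg (by positivity)]
  exact (le_mul_of_one_le_right (by positivity) (Real.one_le_exp (by positivity))).trans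
    (sq_pow_mul_exp_le hs k (h x))

lemma integral_sq_pow_le (H : HasExpSqBound μ h s) (k : ℕ) :
    ∫ x, (h x ^ 2) ^ k ∂μ ≤ k.factorial * (4 * s) ^ k * 2 := by
  have hs := H.pos
  have pow_le (x : α) : (h x ^ 2) ^ k ≤
      k.factorial * (4 * s) ^ k * Real.exp (h x ^ 2 / (4 * s)) := by
    have h1 := Real.pow_div_factorial_le_exp (h x ^ 2 / (4 * s)) (by positivity) k
    rw [div_pow, div_div, div_le_iff₀ (by positivity)] at h1
    linarith
  refine (integral_mono (H.integrable_sq_pow k) (H.integrable.const_mul _) pow_le).trans ?_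
  rw [integral_const_mul]
  gcongr
  exact H.integral_le

variable [IsProbabilityMeasure μ]

lemma integrable_self (H : HasExpSqBound μ h s) : Integrable h μ := by
  have hs := H.pos
  refine integrable_of_sq_le H.measurable (H.integrable.const_mul (4 * s)) fun x => ?_
  rw [← div_le_iff₀' (by positivity)]
  linarith [Real.add_one_le_exp (h x ^ 2 / (4 * s))]

/-- For small `θ`, `exp z ≤ z + exp z²` and convexity reduce the bound to the square-exponential
moment. -/
lemma mgf_le_of_small (H : HasExpSqBound μ h s) (h0 : ∫ x, h x ∂μ = 0)
    (hθ : θ ^ 2 * (4 * s) ≤ 1) (hexp : Integrable (fun x => Real.exp (θ * h x)) μ) :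
    mgf h μ θ ≤ Real.exp (θ ^ 2 * (4 * s)) := by
  have hs := H.pos
  set q := θ ^ 2 * (4 * s) with hq
  set E : α → ℝ := fun x => Real.exp (h x ^ 2 / (4 * s))
  have hE : Integrable E μ := H.integrable
  have hq0 : 0 ≤ q := by positivity
  have exp_le (x : α) : Real.exp (θ * h x) ≤ θ * h x + ((1 - q) + q * E x) := by
    refine (exp_le_add_exp_sq _).trans ?_
    rw [show (θ * h x) ^ 2 = q * (h x ^ 2 / (4 * s)) by rw [hq]; field_simp]
    linarith [exp_mul_le (w := h x ^ 2 / (4 * s)) hq0 hθ]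
  have hlin := H.integrable_self.const_mul θ
  have hconv : Integrable (fun x => (1 - q) + q * E x) μ :=
    (integrable_const (1 - q)).add (hE.const_mul q)
  calc mgf h μ θ ≤ ∫ x, (θ * h x + ((1 - q) + q * E x)) ∂μ :=
        integral_mono hexp (hlin.add hconv) exp_le
    _ = (1 - q) + q * ∫ x, E x ∂μ := by
        rw [integral_add hlin hconv, integral_add (integrable_const (1 - q)) (hE.const_mul q),
          integral_const_mul, integral_const_mul, h0]
        simp
    _ ≤ 1 + q := by nlinarith [H.integral_le]
    _ ≤ Real.exp q := by linarith [Real.add_one_le_exp q]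

lemma hasMGFBound (H : HasExpSqBound μ h s) (h0 : ∫ x, h x ∂μ = 0) (θ : ℝ) :
    HasMGFBound μ h θ (4 * s) := by
  have hs := H.pos
  have hm := H.measurable
  have exp_le (x : α) :
      Real.exp (θ * h x) ≤ Real.exp (θ ^ 2 * s) * Real.exp (h x ^ 2 / (4 * s)) := by
    rw [← Real.exp_add, Real.exp_le_exp]
    have h1 : 0 ≤ (2 * s * θ - h x) ^ 2 / (4 * s) := by positivity
    have h2 : (2 * s * θ - h x) ^ 2 / (4 * s) =
        θ ^ 2 * s + h x ^ 2 / (4 * s) - θ * h x := by field_simp; ring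
    linarith
  have hdom := H.integrable.const_mul (Real.exp (θ ^ 2 * s))
  have hexp : Integrable (fun x => Real.exp (θ * h x)) μ := by
    refine hdom.mono' (by fun_prop) (.of_forall fun x => ?_)
    rw [Real.norm_eq_abs, Real.abs_exp]
    exact exp_le x
  refine ⟨hexp, ?_⟩
  rcases le_or_gt (θ ^ 2 * (4 * s)) 1 with hθ | hθ
  · exact H.mgf_le_of_small h0 hθ hexp
  calc mgf h μ θ ≤ ∫ x, Real.exp (θ ^ 2 * s) * Real.exp (h x ^ 2 / (4 * s)) ∂μ :=
        integral_mono hexp hdom exp_le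
    _ ≤ Real.exp (θ ^ 2 * s) * 2 := by rw [integral_const_mul]; gcongr; exact H.integral_le
    _ ≤ Real.exp (θ ^ 2 * s) * Real.exp (3 * (θ ^ 2 * s)) := by
        gcongr
        nlinarith [Real.quadratic_le_exp_of_nonneg (x := 3 * (θ ^ 2 * s)) (by positivity)]
    _ = Real.exp (θ ^ 2 * (4 * s)) := by rw [← Real.exp_add]; ring_nf

lemma hasMGFBound_sq_sub_integral (H : HasExpSqBound μ h s) (hθ : |θ| * s ≤ 1 / 8) :
    HasMGFBound μ (fun x => h x ^ 2 - ∫ y, h y ^ 2 ∂μ) θ (256 * s ^ 2) := by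
  have hs := H.pos
  have hm := H.measurable
  refine hasMGFBound_sub_integral (G := fun x => 128 * s ^ 2 * Real.exp (h x ^ 2 / (4 * s)))
    (by fun_prop) (H.integrable.const_mul _) (fun x => ?_) ?_
  · have h1 : |θ * h x ^ 2| ≤ h x ^ 2 / (8 * s) := by
      rw [abs_mul, abs_of_nonneg (sq_nonneg (h x)), le_div_iff₀ (by positivity)]
      nlinarith [sq_nonneg (h x)]
    calc (h x ^ 2) ^ 2 * Real.exp |θ * h x ^ 2|
        ≤ (h x ^ 2) ^ 2 * Real.exp (h x ^ 2 / (8 * s)) := by gcongr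
      _ ≤ _ := sq_pow_mul_exp_le hs 2 (h x)
      _ = _ := by norm_num [Nat.factorial]; ring
  · rw [integral_const_mul]
    nlinarith [H.integral_le, sq_nonneg s]

variable {ρ r : α → ℝ} {τ m : ℝ}

lemma hasMGFBound_mul_sq_sub_integral (H : HasExpSqBound μ h s) (hm : 0 < m) (hρ : Measurable ρ)
    (hτ : ∀ x, |ρ x| ≤ τ) (hr : ∀ x, |ρ x| ≤ |r x|) (hr4 : Integrable (fun x => r x ^ 4) μ)
    (hr4le : ∫ x, r x ^ 4 ∂μ ≤ 2 ^ 24 * m ^ 2 * s ^ 4) (hθ : |θ| * τ * s ≤ 1 / 16) :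
    HasMGFBound μ (fun x => ρ x * h x ^ 2 - ∫ y, ρ y * h y ^ 2 ∂μ) θ (2 ^ 24 * m * s ^ 4) := by
  have hs := H.pos
  have hmeas := H.measurable
  refine hasMGFBound_mul_sub_integral (Y := fun x => h x ^ 2)
    (G := fun x => 98304 * s ^ 4 * Real.exp (h x ^ 2 / (4 * s)))
    hm hρ (by fun_prop) hr hr4 (H.integrable.const_mul _) (fun x => ?_) ?_
  · have h1 : 2 * |θ * (ρ x * h x ^ 2)| ≤ h x ^ 2 / (8 * s) := by
      have h2 : |θ| * |ρ x| * s ≤ 1 / 16 := le_trans (by gcongr; exact hτ x) hθ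
      rw [abs_mul, abs_mul, abs_of_nonneg (sq_nonneg (h x)), le_div_iff₀ (by positivity)]
      nlinarith [sq_nonneg (h x)]
    calc (h x ^ 2) ^ 4 * Real.exp (2 * |θ * (ρ x * h x ^ 2)|)
        ≤ (h x ^ 2) ^ 4 * Real.exp (h x ^ 2 / (8 * s)) := by gcongr
      _ ≤ _ := sq_pow_mul_exp_le hs 4 (h x)
      _ = _ := by norm_num [Nat.factorial]; ring
  · have h1 : (∫ x, r x ^ 4 ∂μ) / m ≤ 2 ^ 24 * m * s ^ 4 := by
      rw [div_le_iff₀ hm]; linarith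
    have h2 : m * (98304 * s ^ 4 * ∫ x, Real.exp (h x ^ 2 / (4 * s)) ∂μ) ≤
        m * (98304 * s ^ 4 * 2) := by gcongr; exact H.integral_le
    rw [integral_const_mul]
    nlinarith [show 0 < m * s ^ 4 by positivity]

lemma hasMGFBound_mul (H : HasExpSqBound μ h s) (hm : 0 < m) (hρ : Measurable ρ)
    (hτ : ∀ x, |ρ x| ≤ τ) (hr : ∀ x, |ρ x| ≤ |r x|) (hr4 : Integrable (fun x => r x ^ 4) μ)
    (hr4le : ∫ x, r x ^ 4 ∂μ ≤ 2 ^ 24 * m ^ 2 * s ^ 4) (h0 : ∫ x, ρ x * h x ∂μ = 0)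
    (hθ : |θ| * τ * √s ≤ 1 / 8) :
    HasMGFBound μ (fun x => ρ x * h x) θ (2 ^ 24 * m * s ^ 3) := by
  have hs := H.pos
  have abs_mul_le (x : α) : 2 * |θ * (ρ x * h x)| ≤ 1 + h x ^ 2 / (8 * s) := by
    have h1 : |θ| * |ρ x| * √s ≤ 1 / 8 := le_trans (by gcongr; exact hτ x) hθ
    have h2 : |θ * (ρ x * h x)| ≤ |h x| / √s / 8 := by
      rw [abs_mul, abs_mul, div_div, le_div_iff₀ (by positivity)]
      nlinarith [abs_nonneg (h x)]
    have h3 : h x ^ 2 / (8 * s) = (|h x| / √s) ^ 2 / 8 := by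
      rw [div_pow, sq_abs, Real.sq_sqrt hs.le]; field_simp
    nlinarith [sq_nonneg (|h x| / √s - 1)]
  have centered := hasMGFBound_mul_sub_integral (μ := μ) (θ := θ) (V := 2 ^ 24 * m * s ^ 3)
    (G := fun x => 384 * s ^ 2 * Real.exp (h x ^ 2 / (4 * s))) (mul_pos hm hs) hρ H.measurable hr
    hr4 (H.integrable.const_mul _) (fun x => ?_) ?_
  · simpa only [h0, sub_zero] using centered
  · calc h x ^ 4 * Real.exp (2 * |θ * (ρ x * h x)|)
        ≤ h x ^ 4 * Real.exp (1 + h x ^ 2 / (8 * s)) := by gcongr; exact abs_mul_le x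
      _ = Real.exp 1 * ((h x ^ 2) ^ 2 * Real.exp (h x ^ 2 / (8 * s))) := by
          rw [Real.exp_add]; ring
      _ ≤ 3 * (Nat.factorial 2 * (8 * s) ^ 2 * Real.exp (h x ^ 2 / (4 * s))) := by
          gcongr ?_ * ?_
          · exact Real.exp_one_lt_three.le
          · exact sq_pow_mul_exp_le hs 2 (h x)
      _ = _ := by norm_num [Nat.factorial]; ring
  · have h1 : (∫ x, r x ^ 4 ∂μ) / (m * s) ≤ 2 ^ 24 * m * s ^ 3 := by
      rw [div_le_iff₀ (by positivity)]; nlinarith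
    have h2 : m * s * (384 * s ^ 2 * ∫ x, Real.exp (h x ^ 2 / (4 * s)) ∂μ) ≤
        m * s * (384 * s ^ 2 * 2) := by gcongr; exact H.integral_le
    rw [integral_const_mul]
    nlinarith [show 0 < m * s ^ 3 by positivity]

end HasExpSqBound

/-! ### Gaussian vectors -/

section GaussianReal

lemma hasExpSqBound_gaussianReal_self {v : NNReal} (hv : v ≠ 0) :
    HasExpSqBound (gaussianReal 0 v) (fun x => x) v := by
  have hv' : (0 : ℝ) < v := by exact_mod_cast pos_iff_ne_zero.2 hv
  have density_mul_exp (x : ℝ) : gaussianPDFReal 0 v x * Real.exp (x ^ 2 / (4 * v)) =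
      (√(2 * Real.pi * v))⁻¹ * Real.exp (-(1 / (4 * v)) * x ^ 2) := by
    rw [gaussianPDFReal, mul_assoc, ← Real.exp_add]
    congr 2
    field_simp
    ring
  refine ⟨hv', measurable_id, ?_, ?_⟩
  · rw [gaussianReal_of_var_ne_zero _ hv,
      integrable_withDensity_iff_integrable_smul' (measurable_gaussianPDF _ _)
        (.of_forall fun _ => gaussianPDF_lt_top)]
    simp only [toReal_gaussianPDF, smul_eq_mul, density_mul_exp]
    exact (integrable_exp_neg_mul_sq (by positivity)).const_mul _
  · rw [integral_gaussianReal_eq_integral_smul hv]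
    simp only [smul_eq_mul, density_mul_exp]
    rw [integral_const_mul, integral_gaussian, ← Real.sqrt_inv, ← Real.sqrt_mul (by positivity),
      show (2 * Real.pi * (v : ℝ))⁻¹ * (Real.pi / (1 / (4 * v))) = 2 by field_simp; norm_num,
      Real.sqrt_le_left (by norm_num)]
    norm_num

lemma hasExpSqBound_gaussianReal {v s : NNReal} (hs : 0 < s) (hvs : v ≤ s) :
    HasExpSqBound (gaussianReal 0 v) (fun x => x) s := by
  rcases eq_or_ne v 0 with rfl | hv
  · rw [gaussianReal_zero_var]
    exact ⟨by exact_mod_cast hs, measurable_id, integrable_dirac (by simp), by simp⟩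
  · exact (hasExpSqBound_gaussianReal_self hv).mono (by exact_mod_cast hvs)

lemma hasDerivAt_mul_exp_sq {f : ℝ → ℝ} {f' v t : ℝ} (h : HasDerivAt f f' t) :
    HasDerivAt (fun x => f x * Real.exp (v * x ^ 2 / 2))
      ((f' + v * t * f t) * Real.exp (v * t ^ 2 / 2)) t := by
  have h1 : HasDerivAt (fun x : ℝ => v * x ^ 2 / 2) (v * t) t := by
    refine (((hasDerivAt_pow 2 t).const_mul v).div_const 2).congr_deriv ?_
    push_cast
    ring
  exact (h.mul h1.exp).congr_deriv (by ring)

lemma integral_pow_four_gaussianReal (v : NNReal) :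
    ∫ x, x ^ 4 ∂(gaussianReal 0 v) = 3 * (v : ℝ) ^ 2 := by
  have h0 : mgf id (gaussianReal 0 v) = fun t => 1 * Real.exp (v * t ^ 2 / 2) := by
    rw [mgf_id_gaussianReal]; ext t; simp
  have d1 : deriv (fun t : ℝ => 1 * Real.exp (v * t ^ 2 / 2)) =
      fun t => (v * t) * Real.exp (v * t ^ 2 / 2) := by
    ext t
    rw [(hasDerivAt_mul_exp_sq (hasDerivAt_const t (1 : ℝ))).deriv]
    ring
  have d2 : deriv (fun t : ℝ => (v * t) * Real.exp (v * t ^ 2 / 2)) =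
      fun t => (v + v ^ 2 * t ^ 2) * Real.exp (v * t ^ 2 / 2) := by
    ext t
    rw [(hasDerivAt_mul_exp_sq ((hasDerivAt_id' t).const_mul (v : ℝ))).deriv]
    ring
  have d3 : deriv (fun t : ℝ => (v + v ^ 2 * t ^ 2) * Real.exp (v * t ^ 2 / 2)) =
      fun t => (3 * v ^ 2 * t + v ^ 3 * t ^ 3) * Real.exp (v * t ^ 2 / 2) := by
    ext t
    rw [(hasDerivAt_mul_exp_sq
      (((hasDerivAt_pow 2 t).const_mul ((v : ℝ) ^ 2)).const_add (v : ℝ))).deriv]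
    push_cast
    ring
  have d4 : deriv (fun t : ℝ => (3 * v ^ 2 * t + v ^ 3 * t ^ 3) * Real.exp (v * t ^ 2 / 2)) 0 =
      3 * (v : ℝ) ^ 2 := by
    have h3 : HasDerivAt (fun t => 3 * (v : ℝ) ^ 2 * t + (v : ℝ) ^ 3 * t ^ 3)
        (3 * (v : ℝ) ^ 2) 0 :=
      (((hasDerivAt_id' (0 : ℝ)).const_mul (3 * (v : ℝ) ^ 2)).add
        ((hasDerivAt_pow 3 0).const_mul ((v : ℝ) ^ 3))).congr_deriv (by simp)
    rw [(hasDerivAt_mul_exp_sq h3).deriv]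
    simp
  have h := iteratedDeriv_mgf_zero (X := id) (μ := gaussianReal 0 v)
    (by rw [integrableExpSet_id_gaussianReal]; simp) 4
  simp only [h0, iteratedDeriv_succ, iteratedDeriv_zero, d1, d2, d3, d4] at h
  simpa using h.symm

end GaussianReal

section GaussVec

variable {d : ℕ} {s : NNReal}

@[fun_prop]
lemma measurable_dotProduct_right (x : Fin d → ℝ) : Measurable fun g : Fin d → ℝ => g ⬝ᵥ x := by
  unfold dotProduct; fun_prop

lemma gaussVec_map_dotProduct (x : Fin d → ℝ) :
    (gaussVec d s).map (fun g => g ⬝ᵥ x) = gaussianReal 0 (s * ∑ k, Real.toNNReal (x k ^ 2)) := by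
  have indep : iIndepFun (fun k (g : Fin d → ℝ) => g k * x k) (gaussVec d s) :=
    iIndepFun_pi (μ := fun _ => gaussianReal 0 s) (X := fun k y => y * x k)
      fun k => by fun_prop
  have law (k : Fin d) : (gaussVec d s).map (fun g => g k * x k) =
      gaussianReal 0 (Real.toNNReal (x k ^ 2) * s) := by
    rw [← Function.comp_def (· * x k), ← Measure.map_map (by fun_prop) (by fun_prop), gaussVec,
      (measurePreserving_eval (fun _ : Fin d => gaussianReal 0 s) k).map_eq,
      gaussianReal_map_mul_const, mul_zero, Real.toNNReal_of_nonneg (sq_nonneg (x k))]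
  refine Measure.ext_of_charFun (funext fun t => ?_)
  simp only [dotProduct]
  rw [indep.charFun_map_fun_sum_eq_prod
    fun k => Measurable.aemeasurable (by fun_prop), Finset.prod_apply]
  simp only [law, charFun_gaussianReal]
  rw [← Complex.exp_sum]
  congr 1
  push_cast
  simp only [mul_zero, zero_mul, zero_sub, Finset.sum_neg_distrib, Finset.sum_mul,
    Finset.sum_div, mul_comm (s : ℂ)]

lemma coe_mul_sum_toNNReal_sq (x : Fin d → ℝ) :
    ((s * ∑ k, Real.toNNReal (x k ^ 2) : NNReal) : ℝ) = s * ∑ k, x k ^ 2 := by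
  push_cast
  congr 1
  exact Finset.sum_congr rfl fun k _ => Real.coe_toNNReal _ (sq_nonneg _)

lemma hasExpSqBound_dotProduct (hs : 0 < s) {x : Fin d → ℝ} (hx : ∑ k, x k ^ 2 ≤ 1) :
    HasExpSqBound (gaussVec d s) (fun g => g ⬝ᵥ x) s := by
  have hv : s * ∑ k, Real.toNNReal (x k ^ 2) ≤ s := by
    rw [← NNReal.coe_le_coe, coe_mul_sum_toNNReal_sq]
    exact mul_le_of_le_one_right s.2 hx
  have H := hasExpSqBound_gaussianReal hs hv
  rw [← gaussVec_map_dotProduct] at H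
  exact H.comp_map (measurable_dotProduct_right x)

lemma hasMGFBound_dotProduct (x : Fin d → ℝ) (θ : ℝ) :
    HasMGFBound (gaussVec d s) (fun g => g ⬝ᵥ x) θ (s * (∑ k, x k ^ 2) / 2) := by
  have hm := (measurable_dotProduct_right x).aemeasurable (μ := gaussVec d s)
  refine ⟨?_, ?_⟩
  · have h := integrable_exp_mul_gaussianReal (μ := 0) (v := s * ∑ k, Real.toNNReal (x k ^ 2)) θ
    rw [← gaussVec_map_dotProduct] at h
    exact h.comp_aemeasurable hm
  · rw [mgf_gaussianReal (gaussVec_map_dotProduct (s := s) x) θ, coe_mul_sum_toNNReal_sq]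
    exact (congrArg Real.exp (by ring)).le

lemma integral_dotProduct_sq (x : Fin d → ℝ) :
    ∫ g, (g ⬝ᵥ x) ^ 2 ∂(gaussVec d s) = s * ∑ k, x k ^ 2 := by
  have hm := (measurable_dotProduct_right x).aemeasurable (μ := gaussVec d s)
  have h := variance_fun_id_gaussianReal (μ := 0) (v := s * ∑ k, Real.toNNReal (x k ^ 2))
  rw [variance_eq_integral (by fun_prop), integral_id_gaussianReal,
    coe_mul_sum_toNNReal_sq] at h
  rw [← h, ← gaussVec_map_dotProduct, integral_map hm (by fun_prop)]
  simp

lemma measurePreserving_neg_gaussVec :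
    MeasurePreserving (fun g : Fin d → ℝ => -g) (gaussVec d s) (gaussVec d s) := by
  refine measurePreserving_pi _ _ (f := fun _ (y : ℝ) => -y) fun _ => ⟨measurable_neg, ?_⟩
  rw [gaussianReal_map_neg, neg_zero]

lemma integral_mul_dotProduct_eq_zero {f : (Fin d → ℝ) → ℝ} (hf : ∀ g, f (-g) = f g)
    (x : Fin d → ℝ) : ∫ g, f g * (g ⬝ᵥ x) ∂(gaussVec d s) = 0 := by
  have h := (measurePreserving_neg_gaussVec (d := d) (s := s)).integral_comp
    (MeasurableEquiv.neg (Fin d → ℝ)).measurableEmbedding (fun g => f g * (g ⬝ᵥ x))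
  simp only [hf, neg_dotProduct, mul_neg, integral_neg] at h
  linarith

lemma memLp_dotProduct (x : Fin d → ℝ) {q : ENNReal} (hq : q ≠ ⊤) :
    MemLp (fun g => g ⬝ᵥ x) q (gaussVec d s) := by
  have h := memLp_id_gaussianReal' (μ := 0) (v := s * ∑ k, Real.toNNReal (x k ^ 2)) q hq
  rw [← gaussVec_map_dotProduct] at h
  exact h.comp_of_map (measurable_dotProduct_right x).aemeasurable

lemma integrable_dotProduct_pow_four (x : Fin d → ℝ) :
    Integrable (fun g => (g ⬝ᵥ x) ^ 4) (gaussVec d s) := by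
  have h := (memLp_dotProduct (s := s) x (q := 4) (by norm_num)).integrable_norm_pow (by norm_num)
  simpa only [Real.norm_eq_abs, Even.pow_abs (show Even 4 by decide)] using h

lemma integral_dotProduct_pow_four (x : Fin d → ℝ) :
    ∫ g, (g ⬝ᵥ x) ^ 4 ∂(gaussVec d s) = 3 * (s : ℝ) ^ 2 * (∑ k, x k ^ 2) ^ 2 := by
  have hm := (measurable_dotProduct_right x).aemeasurable (μ := gaussVec d s)
  have h := integral_pow_four_gaussianReal (s * ∑ k, Real.toNNReal (x k ^ 2))
  rw [← gaussVec_map_dotProduct, coe_mul_sum_toNNReal_sq, integral_map hm (by fun_prop)] at h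
  rw [h]
  ring

lemma sq_mul_sq_eq_polarization (a b : ℝ) :
    a ^ 2 * b ^ 2 = ((a + b) ^ 4 + (a - b) ^ 4 - (2 * a ^ 4 + 2 * b ^ 4)) / 12 := by
  ring

lemma integrable_sq_mul_dotProduct_sq (x y : Fin d → ℝ) :
    Integrable (fun g => (g ⬝ᵥ x) ^ 2 * (g ⬝ᵥ y) ^ 2) (gaussVec d s) := by
  simp only [sq_mul_sq_eq_polarization, ← dotProduct_add, ← dotProduct_sub]
  have h := integrable_dotProduct_pow_four (d := d) (s := s)
  exact (((h _).add (h _)).sub (((h _).const_mul 2).add ((h _).const_mul 2))).div_const 12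

lemma integral_sq_mul_dotProduct_sq (x y : Fin d → ℝ) :
    ∫ g, (g ⬝ᵥ x) ^ 2 * (g ⬝ᵥ y) ^ 2 ∂(gaussVec d s) =
      (s : ℝ) ^ 2 * ((∑ k, x k ^ 2) * (∑ k, y k ^ 2) + 2 * (x ⬝ᵥ y) ^ 2) := by
  simp only [sq_mul_sq_eq_polarization (_ ⬝ᵥ x), ← dotProduct_add, ← dotProduct_sub]
  have h := integrable_dotProduct_pow_four (d := d) (s := s)
  have hadd : Integrable (fun g => (g ⬝ᵥ (x + y)) ^ 4 + (g ⬝ᵥ (x - y)) ^ 4) (gaussVec d s) :=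
    (h _).add (h _)
  have hadd2 : Integrable (fun g => 2 * (g ⬝ᵥ x) ^ 4 + 2 * (g ⬝ᵥ y) ^ 4) (gaussVec d s) :=
    ((h _).const_mul 2).add ((h _).const_mul 2)
  have sum_add_sq : ∑ k, (x + y) k ^ 2 = ∑ k, x k ^ 2 + ∑ k, y k ^ 2 + 2 * (x ⬝ᵥ y) := by
    simp only [Pi.add_apply, dotProduct, Finset.mul_sum, ← Finset.sum_add_distrib]
    exact Finset.sum_congr rfl fun k _ => by ring
  have sum_sub_sq : ∑ k, (x - y) k ^ 2 = ∑ k, x k ^ 2 + ∑ k, y k ^ 2 - 2 * (x ⬝ᵥ y) := by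
    simp only [Pi.sub_apply, dotProduct, Finset.mul_sum, ← Finset.sum_add_distrib,
      ← Finset.sum_sub_distrib]
    exact Finset.sum_congr rfl fun k _ => by ring
  rw [integral_div, integral_sub hadd hadd2, integral_add (h _) (h _),
    integral_add ((h _).const_mul 2) ((h _).const_mul 2), integral_const_mul, integral_const_mul]
  simp only [integral_dotProduct_pow_four, sum_add_sq, sum_sub_sq]
  ring

end GaussVec

/-! ### The squared length of a Gaussian vector -/

lemma abs_setIntegral_le_sqrt_mul_sqrt {α : Type*} [MeasurableSpace α] {μ : Measure α}
    [IsFiniteMeasure μ] {f : α → ℝ} (hf : MemLp f 2 μ) {S : Set α} (hS : MeasurableSet S) :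
    |∫ x in S, f x ∂μ| ≤ √(∫ x, f x ^ 2 ∂μ) * √(μ.real S) := by
  have hf' : MemLp (fun x => |f x|) (ENNReal.ofReal 2) μ := by simpa using hf.norm
  have hS' : MemLp (S.indicator fun _ => (1 : ℝ)) (ENNReal.ofReal 2) μ :=
    memLp_indicator_const _ hS 1 (Or.inr (measure_ne_top μ S))
  have holder := integral_mul_le_Lp_mul_Lq_of_nonneg Real.HolderConjugate.two_two
    (.of_forall fun x => abs_nonneg (f x))
    (.of_forall fun x => Set.indicator_nonneg (fun _ _ => zero_le_one) x) hf' hS'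
  have indicator_sq (x : α) : S.indicator (fun _ => (1 : ℝ)) x ^ 2 = S.indicator 1 x := by
    by_cases hx : x ∈ S <;> simp [hx]
  simp only [Real.rpow_two, sq_abs, ← Real.sqrt_eq_rpow, indicator_sq,
    integral_indicator_one hS] at holder
  calc |∫ x in S, f x ∂μ| ≤ ∫ x in S, |f x| ∂μ := abs_integral_le_integral_abs
    _ = ∫ x, |f x| * S.indicator (fun _ => 1) x ∂μ := by
        rw [← integral_indicator hS]
        exact integral_congr_ae (.of_forall fun x => by by_cases hx : x ∈ S <;> simp [hx])
    _ ≤ _ := holder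

/-- The deviation of the squared length of a Gaussian vector `g` of variance `s` in `ℝ^d` from its
mean; it controls the weight of a row of the data matrix. -/
noncomputable def dev (d : ℕ) (s : ℝ) (g : Fin d → ℝ) : ℝ := ∑ k, g k ^ 2 - d * s

/-- The deviation of the squared length, set to zero where it exceeds the level `τ`; being bounded
it can be multiplied with sub-Gaussian variables. -/
noncomputable def truncDev (d : ℕ) (s τ : ℝ) (g : Fin d → ℝ) : ℝ :=
  if |dev d s g| ≤ τ then dev d s g else 0

section Dev

variable {d : ℕ} {τ : ℝ}

section Deterministic

variable {s : ℝ}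

@[fun_prop]
lemma measurable_dev : Measurable (dev d s) := by unfold dev; fun_prop

@[fun_prop]
lemma measurable_truncDev : Measurable (truncDev d s τ) :=
  Measurable.ite (measurableSet_le (by fun_prop) measurable_const) measurable_dev measurable_const

lemma abs_truncDev_le (hτ : 0 ≤ τ) (g : Fin d → ℝ) : |truncDev d s τ g| ≤ τ := by
  unfold truncDev
  split_ifs with h
  · exact h
  · simpa using hτ

lemma abs_truncDev_le_abs_dev (g : Fin d → ℝ) : |truncDev d s τ g| ≤ |dev d s g| := by
  unfold truncDev
  split_ifs with h
  · exact le_rfl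
  · simp

lemma truncDev_neg (g : Fin d → ℝ) : truncDev d s τ (-g) = truncDev d s τ g := by
  have dev_neg : dev d s (-g) = dev d s g := by simp [dev]
  simp only [truncDev, dev_neg]

lemma dev_eq_truncDev_add_indicator (g : Fin d → ℝ) :
    dev d s g = truncDev d s τ g + {g | τ < |dev d s g|}.indicator (dev d s) g := by
  rcases le_or_gt |dev d s g| τ with h | h
  · have hg : g ∉ {g | τ < |dev d s g|} := not_lt.2 h
    rw [truncDev, if_pos h, Set.indicator_of_notMem hg, add_zero]
  · have hg : g ∈ {g | τ < |dev d s g|} := h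
    rw [truncDev, if_neg h.not_ge, Set.indicator_of_mem hg, zero_add]

end Deterministic

variable {s : NNReal} {θ p : ℝ} {x : Fin d → ℝ}

lemma hasMGFBound_dev (hs : 0 < s) (hθ : |θ| * s ≤ 1 / 8) :
    HasMGFBound (gaussVec d s) (dev d s) θ (256 * d * (s : ℝ) ^ 2) := by
  have integral_sq : ∫ y, y ^ 2 ∂(gaussianReal 0 s) = s := by
    have h := variance_fun_id_gaussianReal (μ := 0) (v := s)
    rw [variance_eq_integral (by fun_prop), integral_id_gaussianReal] at h
    simpa using h
  have h := hasMGFBound_sum (ι := Fin d)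
    fun _ => (hasExpSqBound_gaussianReal hs le_rfl).hasMGFBound_sq_sub_integral hθ
  simp only [integral_sq, Finset.sum_sub_distrib, Finset.sum_const, Finset.card_univ,
    Fintype.card_fin, nsmul_eq_mul] at h
  exact h.mono (by linarith)

lemma measure_dev_ge_le (hs : 0 < s) (hτ : 0 < τ) (hp : 0 < p)
    (h1 : 1024 * p * d * (s : ℝ) ^ 2 ≤ τ ^ 2) (h2 : 16 * p * s ≤ τ) :
    gaussVec d s {g | τ ≤ |dev d s g|} ≤ ENNReal.ofReal (2 * Real.exp (-p)) := by
  refine measure_abs_ge_le_of_hasMGFBound hτ hp (by linarith) fun θ hθ => hasMGFBound_dev hs ?_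
  rw [hθ, div_mul_eq_mul_div, div_le_iff₀ hτ]
  linarith

lemma integral_dev_pow_four (hs : 0 < s) :
    Integrable (fun g => dev d s g ^ 4) (gaussVec d s) ∧
      ∫ g, dev d s g ^ 4 ∂(gaussVec d s) ≤ 2 ^ 24 * (d : ℝ) ^ 2 * (s : ℝ) ^ 4 := by
  rcases d.eq_zero_or_pos with rfl | hd
  · simp [dev]
  have hd' : (1 : ℝ) ≤ d := by exact_mod_cast hd
  have one_le_sqrt : 1 ≤ √(d : ℝ) := Real.one_le_sqrt.2 hd'
  have sqrt_sq : √(d : ℝ) ^ 2 = d := Real.sq_sqrt (by linarith)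
  set θ : ℝ := 1 / (16 * √(d : ℝ) * s) with hθ
  have hθ0 : 0 < θ := by positivity
  have hθs : θ * s ≤ 1 / 8 := by
    rw [show θ * s = 1 / (16 * √(d : ℝ)) by rw [hθ]; field_simp]
    exact one_div_le_one_div_of_le (by norm_num) (by linarith)
  obtain ⟨hint, hle⟩ := integral_pow_four_le_of_hasMGFBound measurable_dev hθ0
    (hasMGFBound_dev (d := d) hs (by rwa [abs_of_pos hθ0]))
    (hasMGFBound_dev hs (by rwa [abs_neg, abs_of_pos hθ0]))
  refine ⟨hint, hle.trans ?_⟩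
  have exponent_eq : θ ^ 2 * (256 * d * (s : ℝ) ^ 2) = 1 := by
    rw [hθ, div_pow, mul_pow, mul_pow, sqrt_sq]; field_simp; ring
  have factor_eq : 48 / θ ^ 4 = 48 * 65536 * (d : ℝ) ^ 2 * (s : ℝ) ^ 4 := by
    rw [hθ, div_pow, mul_pow, mul_pow, show √(d : ℝ) ^ 4 = (√(d : ℝ) ^ 2) ^ 2 by ring, sqrt_sq]
    field_simp; ring
  rw [exponent_eq, factor_eq]
  nlinarith [Real.exp_one_lt_d9, show 0 < (d : ℝ) ^ 2 * (s : ℝ) ^ 4 by positivity]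

lemma dev_mul_dotProduct_sq_eq (x g : Fin d → ℝ) : dev d s g * (g ⬝ᵥ x) ^ 2 =
    ∑ k, (g ⬝ᵥ x) ^ 2 * (g ⬝ᵥ Pi.single k 1) ^ 2 - d * s * (g ⬝ᵥ x) ^ 2 := by
  simp only [dotProduct_single, mul_one, dev, ← Finset.mul_sum]
  ring

lemma integral_dev_mul_dotProduct_sq (x : Fin d → ℝ) :
    ∫ g, dev d s g * (g ⬝ᵥ x) ^ 2 ∂(gaussVec d s) = 2 * (s : ℝ) ^ 2 * ∑ k, x k ^ 2 := by
  have hterm (k : Fin d) := integrable_sq_mul_dotProduct_sq (s := s) x (Pi.single k 1)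
  have sum_single_sq (k : Fin d) : ∑ j, (Pi.single k (1 : ℝ) : Fin d → ℝ) j ^ 2 = 1 := by
    rw [Finset.sum_eq_single k] <;> simp +contextual
  simp only [dev_mul_dotProduct_sq_eq]
  rw [integral_sub (integrable_finsetSum _ fun k _ => hterm k)
      ((memLp_dotProduct x (by norm_num)).integrable_sq.const_mul _),
    integral_finsetSum _ fun k _ => hterm k, integral_const_mul, integral_dotProduct_sq]
  simp only [integral_sq_mul_dotProduct_sq, sum_single_sq]
  simp only [dotProduct_single, mul_one, ← Finset.mul_sum, Finset.sum_add_distrib,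
    Finset.sum_const, Finset.card_univ, Fintype.card_fin, nsmul_eq_mul]
  ring

lemma integral_sq_dev_mul_dotProduct_sq (hs : 0 < s) (hx : ∑ k, x k ^ 2 ≤ 1) :
    Integrable (fun g => (dev d s g * (g ⬝ᵥ x) ^ 2) ^ 2) (gaussVec d s) ∧
      ∫ g, (dev d s g * (g ⬝ᵥ x) ^ 2) ^ 2 ∂(gaussVec d s) ≤
        2 ^ 24 * d * (s : ℝ) ^ 4 := by
  rcases d.eq_zero_or_pos with rfl | hd
  · simp [dev]
  have hd' : (0 : ℝ) < d := by exact_mod_cast hd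
  obtain ⟨hi4, hle4⟩ := integral_dev_pow_four (d := d) hs
  have H := hasExpSqBound_dotProduct hs hx
  have hi8 := H.integrable_sq_pow 4
  have hle8 := H.integral_sq_pow_le 4
  have sq_le (g : Fin d → ℝ) : (dev d s g * (g ⬝ᵥ x) ^ 2) ^ 2 ≤
      (dev d s g ^ 4 / d + d * ((g ⬝ᵥ x) ^ 2) ^ 4) / 2 := by
    have am_gm := sq_mul_le_pow_four_div_add hd' (dev d s g) (((g ⬝ᵥ x) ^ 2) ^ 2)
    rwa [← mul_pow, ← pow_mul ((g ⬝ᵥ x) ^ 2)] at am_gm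
  have hdom : Integrable (fun g => (dev d s g ^ 4 / d + d * ((g ⬝ᵥ x) ^ 2) ^ 4) / 2)
      (gaussVec d s) := ((hi4.div_const _).add (hi8.const_mul _)).div_const 2
  have hint : Integrable (fun g => (dev d s g * (g ⬝ᵥ x) ^ 2) ^ 2) (gaussVec d s) := by
    refine hdom.mono' (Measurable.aestronglyMeasurable (by fun_prop)) (.of_forall fun g => ?_)
    rw [Real.norm_eq_abs, abs_of_nonneg (sq_nonneg _)]
    exact sq_le g
  refine ⟨hint, (integral_mono hint hdom sq_le).trans ?_⟩
  rw [integral_div, integral_add (hi4.div_const _) (hi8.const_mul _), integral_div,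
    integral_const_mul]
  have h1 : (∫ g, dev d s g ^ 4 ∂(gaussVec d s)) / d ≤ 2 ^ 24 * d * (s : ℝ) ^ 4 := by
    rw [div_le_iff₀ hd']
    linarith
  have h2 := mul_le_mul_of_nonneg_left hle8 hd'.le
  norm_num [Nat.factorial] at h1 h2 ⊢
  nlinarith [show 0 ≤ (d : ℝ) * (s : ℝ) ^ 4 by positivity]

lemma abs_integral_truncDev_mul_sub_le (hs : 0 < s) (hx : ∑ k, x k ^ 2 ≤ 1) (τ : ℝ) :
    |∫ g, truncDev d s τ g * (g ⬝ᵥ x) ^ 2 ∂(gaussVec d s) - 2 * (s : ℝ) ^ 2 * ∑ k, x k ^ 2| ≤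
      2 ^ 12 * (√(d : ℝ) * (s : ℝ) ^ 2 * √((gaussVec d s).real {g | τ < |dev d s g|})) := by
  set S : Set (Fin d → ℝ) := {g | τ < |dev d s g|}
  have hS : MeasurableSet S := measurableSet_lt measurable_const (by fun_prop)
  set f : (Fin d → ℝ) → ℝ := fun g => dev d s g * (g ⬝ᵥ x) ^ 2 with hf
  obtain ⟨hsq, hsq_le⟩ := integral_sq_dev_mul_dotProduct_sq hs hx
  have hLp : MemLp f 2 (gaussVec d s) :=
    (memLp_two_iff_integrable_sq (Measurable.aestronglyMeasurable (by fun_prop))).2 hsq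
  have trunc_eq (g : Fin d → ℝ) :
      truncDev d s τ g * (g ⬝ᵥ x) ^ 2 = f g - S.indicator f g := by
    simp only [hf, Set.indicator_mul_left]
    linarith [congrArg (· * (g ⬝ᵥ x) ^ 2) (dev_eq_truncDev_add_indicator (s := s) (τ := τ) g)]
  have hfi := hLp.integrable (by norm_num)
  have integral_trunc : ∫ g, truncDev d s τ g * (g ⬝ᵥ x) ^ 2 ∂(gaussVec d s) =
      2 * (s : ℝ) ^ 2 * ∑ k, x k ^ 2 - ∫ g in S, f g ∂(gaussVec d s) := by
    simp only [trunc_eq]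
    rw [integral_sub hfi (hfi.indicator hS), integral_indicator hS, integral_dev_mul_dotProduct_sq]
  rw [integral_trunc, sub_sub_cancel_left, abs_neg]
  calc |∫ g in S, f g ∂(gaussVec d s)|
      ≤ √(∫ g, f g ^ 2 ∂(gaussVec d s)) * √((gaussVec d s).real S) :=
        abs_setIntegral_le_sqrt_mul_sqrt hLp hS
    _ ≤ √((2 ^ 12 * (s : ℝ) ^ 2) ^ 2 * d) * √((gaussVec d s).real S) := by
        gcongr
        linarith
    _ = _ := by
        rw [Real.sqrt_mul (by positivity), Real.sqrt_sq (by positivity)]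
        ring

end Dev

/-! ### The Euclidean norm and nets of the unit ball -/

section EucNorm

variable {d : ℕ}

lemma eucNorm_eq_norm (x : Fin d → ℝ) :
    eucNorm x = ‖(WithLp.toLp 2 x : EuclideanSpace ℝ (Fin d))‖ := by
  rw [EuclideanSpace.norm_eq, eucNorm]
  simp only [Real.norm_eq_abs, sq_abs]

lemma eucNorm_nonneg (x : Fin d → ℝ) : 0 ≤ eucNorm x := Real.sqrt_nonneg _

lemma eucNorm_sq (x : Fin d → ℝ) : eucNorm x ^ 2 = ∑ i, x i ^ 2 :=
  Real.sq_sqrt (Finset.sum_nonneg fun _ _ => sq_nonneg _)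

lemma sum_sq_eq_dotProduct (x : Fin d → ℝ) : ∑ i, x i ^ 2 = x ⬝ᵥ x := by
  simp only [dotProduct, sq]

lemma eucNorm_sq_eq_dotProduct (x : Fin d → ℝ) : eucNorm x ^ 2 = x ⬝ᵥ x := by
  rw [eucNorm_sq, sum_sq_eq_dotProduct]

lemma abs_dotProduct_le (x y : Fin d → ℝ) : |x ⬝ᵥ y| ≤ eucNorm x * eucNorm y := by
  simpa [eucNorm_eq_norm, EuclideanSpace.inner_eq_star_dotProduct, dotProduct_comm] using
    abs_real_inner_le_norm (WithLp.toLp 2 x : EuclideanSpace ℝ (Fin d)) (WithLp.toLp 2 y)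

lemma eucNorm_add_le (x y : Fin d → ℝ) : eucNorm (x + y) ≤ eucNorm x + eucNorm y := by
  simp only [eucNorm_eq_norm, WithLp.toLp_add]
  exact norm_add_le _ _

lemma eucNorm_sub_le (x y : Fin d → ℝ) : eucNorm (x - y) ≤ eucNorm x + eucNorm y := by
  simp only [eucNorm_eq_norm, WithLp.toLp_sub]
  exact norm_sub_le _ _

lemma eucNorm_smul (c : ℝ) (x : Fin d → ℝ) : eucNorm (c • x) = |c| * eucNorm x := by
  simp only [eucNorm_eq_norm, WithLp.toLp_smul, norm_smul, Real.norm_eq_abs]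

lemma eucNorm_le_one_iff {x : Fin d → ℝ} : eucNorm x ≤ 1 ↔ ∑ i, x i ^ 2 ≤ 1 := by
  rw [eucNorm, Real.sqrt_le_left zero_le_one, one_pow]

end EucNorm

section Net

open Metric Module

lemma packingNumber_closedBall_one_le (E : Type*) [NormedAddCommGroup E] [NormedSpace ℝ E]
    [FiniteDimensional ℝ E] :
    packingNumber 2⁻¹ (closedBall (0 : E) 1) ≤ (5 ^ finrank ℝ E : ℕ) := by
  classical
  refine iSup₂_le fun C hC => iSup_le fun hsep => ?_
  by_contra! hcard
  obtain ⟨T, hT, hTcard⟩ := Set.exists_subset_encard_eq (Order.add_one_le_of_lt hcard)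
  lift T to Finset E using Set.finite_of_encard_eq_coe hTcard
  rw [Set.encard_coe_eq_coe_finsetCard] at hTcard
  have double_inj : Function.Injective fun x : E => (2 : ℝ) • x :=
    smul_right_injective E two_ne_zero
  have card_le : (T.image fun x => (2 : ℝ) • x).card ≤ 5 ^ finrank ℝ E := by
    refine Besicovitch.card_le_of_separated _ (Finset.forall_mem_image.2 fun x hx => ?_)
      (Finset.forall_mem_image.2 fun x hx => Finset.forall_mem_image.2 fun y hy hxy => ?_)
    · rw [norm_smul, Real.norm_two]
      linarith [mem_closedBall_zero_iff.1 (hC (hT hx))]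
    · have hdist : ((2⁻¹ : NNReal) : ENNReal) < edist x y :=
        hsep (hT hx) (hT hy) (by rintro rfl; exact hxy rfl)
      rw [edist_nndist, ENNReal.coe_lt_coe, ← NNReal.coe_lt_coe, coe_nndist, dist_eq_norm,
        NNReal.coe_inv, NNReal.coe_ofNat] at hdist
      rw [← smul_sub, norm_smul, Real.norm_two]
      linarith
  rw [Finset.card_image_of_injective T double_inj] at card_le
  have : T.card = 5 ^ finrank ℝ E + 1 := by exact_mod_cast hTcard
  omega

variable {d : ℕ}

/-- The finite set `S` is a `1/2`-net of the Euclidean unit ball of `ℝ^d`. -/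
structure IsHalfNet (S : Finset (Fin d → ℝ)) : Prop where
  eucNorm_le_one : ∀ x ∈ S, eucNorm x ≤ 1
  exists_eucNorm_sub_le : ∀ y, eucNorm y ≤ 1 → ∃ x ∈ S, eucNorm (y - x) ≤ 1 / 2

lemma exists_isHalfNet (d : ℕ) : ∃ S : Finset (Fin d → ℝ), IsHalfNet S ∧ S.card ≤ 5 ^ d := by
  classical
  have hle := packingNumber_closedBall_one_le (EuclideanSpace ℝ (Fin d))
  rw [finrank_euclideanSpace_fin] at hle
  have hpack := (hle.trans_lt (ENat.natCast_lt_top _)).ne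
  obtain ⟨C, hC⟩ : ∃ C : Finset (EuclideanSpace ℝ (Fin d)),
      (C : Set (EuclideanSpace ℝ (Fin d))) = maximalSeparatedSet 2⁻¹ (closedBall 0 1) :=
    (Set.encard_ne_top_iff.1 (encard_maximalSeparatedSet hpack ▸ hpack)).exists_finset_coe
  refine ⟨C.image WithLp.ofLp, ⟨Finset.forall_mem_image.2 fun c hc => ?_, fun y hy => ?_⟩,
    Finset.card_image_le.trans ?_⟩
  · rw [eucNorm_eq_norm, WithLp.toLp_ofLp]
    exact mem_closedBall_zero_iff.1 (maximalSeparatedSet_subset (hC ▸ Finset.mem_coe.2 hc))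
  · rw [eucNorm_eq_norm] at hy
    obtain ⟨c, hc, hyc⟩ := isCover_maximalSeparatedSet hpack (mem_closedBall_zero_iff.2 hy)
    refine ⟨c.ofLp, Finset.mem_image_of_mem _ (Finset.mem_coe.1 (hC ▸ hc)), ?_⟩
    have hdist : edist (WithLp.toLp 2 y) c ≤ ((2⁻¹ : NNReal) : ENNReal) := hyc
    rw [edist_nndist, ENNReal.coe_le_coe, ← NNReal.coe_le_coe, coe_nndist, dist_eq_norm,
      NNReal.coe_inv, NNReal.coe_ofNat] at hdist
    rw [eucNorm_eq_norm, WithLp.toLp_sub, WithLp.toLp_ofLp, one_div]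
    exact hdist
  · rwa [← encard_maximalSeparatedSet hpack, ← hC, Set.encard_coe_eq_coe_finsetCard,
      Nat.cast_le] at hle

/-- The half sums and half differences of the points of `S`; by polarization, a quadratic form
that is small on them comes from a bilinear form that is small on `S`. -/
noncomputable def polarizationPoints (S : Finset (Fin d → ℝ)) : Finset (Fin d → ℝ) :=
  (S ×ˢ S).image (fun p => (1 / 2 : ℝ) • (p.1 + p.2)) ∪
    (S ×ˢ S).image fun p => (1 / 2 : ℝ) • (p.1 - p.2)

lemma card_polarizationPoints_le (S : Finset (Fin d → ℝ)) :
    (polarizationPoints S).card ≤ 2 * S.card ^ 2 := by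
  refine (Finset.card_union_le _ _).trans ?_
  rw [sq, ← Finset.card_product, two_mul]
  exact add_le_add Finset.card_image_le Finset.card_image_le

variable {S : Finset (Fin d → ℝ)} {A : Matrix (Fin d) (Fin d) ℝ} {t : ℝ}

lemma dotProduct_mulVec_comm (hA : A.IsSymm) (x y : Fin d → ℝ) :
    x ⬝ᵥ A *ᵥ y = (A *ᵥ x) ⬝ᵥ y := by
  rw [dotProduct_mulVec, ← mulVec_transpose, hA.eq]

lemma abs_dotProduct_mulVec_le_of_polarizationPoints (hA : A.IsSymm)
    (h : ∀ x ∈ polarizationPoints S, |x ⬝ᵥ A *ᵥ x| ≤ t) {x y : Fin d → ℝ} (hx : x ∈ S)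
    (hy : y ∈ S) : |x ⬝ᵥ A *ᵥ y| ≤ 2 * t := by
  have hxy : (x, y) ∈ S ×ˢ S := Finset.mem_product.2 ⟨hx, hy⟩
  have half_sum := h _ (Finset.mem_union_left _ (Finset.mem_image_of_mem _ hxy))
  have half_sub := h _ (Finset.mem_union_right _ (Finset.mem_image_of_mem _ hxy))
  have polarization : x ⬝ᵥ A *ᵥ y =
      (1 / 2 : ℝ) • (x + y) ⬝ᵥ A *ᵥ ((1 / 2 : ℝ) • (x + y)) -
        (1 / 2 : ℝ) • (x - y) ⬝ᵥ A *ᵥ ((1 / 2 : ℝ) • (x - y)) := by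
    have symm : y ⬝ᵥ A *ᵥ x = x ⬝ᵥ A *ᵥ y := by rw [dotProduct_mulVec_comm hA, dotProduct_comm]
    simp only [mulVec_smul, dotProduct_smul, smul_dotProduct, mulVec_add, mulVec_sub,
      dotProduct_add, dotProduct_sub, add_dotProduct, sub_dotProduct, smul_eq_mul, symm]
    ring
  rw [polarization]
  exact (abs_sub _ _).trans (by linarith)

namespace IsHalfNet

lemma eucNorm_le_one_of_mem_polarizationPoints (hS : IsHalfNet S) {x : Fin d → ℝ}
    (hx : x ∈ polarizationPoints S) : eucNorm x ≤ 1 := by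
  simp only [polarizationPoints, Finset.mem_union, Finset.mem_image, Finset.mem_product] at hx
  obtain ⟨p, ⟨h1, h2⟩, rfl⟩ | ⟨p, ⟨h1, h2⟩, rfl⟩ := hx <;>
    rw [eucNorm_smul, abs_of_pos one_half_pos]
  · linarith [eucNorm_add_le p.1 p.2, hS.eucNorm_le_one _ h1, hS.eucNorm_le_one _ h2]
  · linarith [eucNorm_sub_le p.1 p.2, hS.eucNorm_le_one _ h1, hS.eucNorm_le_one _ h2]

lemma eucNorm_le_two_mul (hS : IsHalfNet S) {b : Fin d → ℝ} (h : ∀ x ∈ S, |b ⬝ᵥ x| ≤ t) :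
    eucNorm b ≤ 2 * t := by
  rcases (eucNorm_nonneg b).eq_or_lt with h0 | h0
  · obtain ⟨x, hx, -⟩ := hS.exists_eucNorm_sub_le 0 (by simp [eucNorm])
    linarith [(abs_nonneg _).trans (h x hx)]
  set y := (eucNorm b)⁻¹ • b with hy
  have unit : eucNorm y ≤ 1 := by
    rw [hy, eucNorm_smul, abs_of_pos (inv_pos.2 h0), inv_mul_cancel₀ h0.ne']
  obtain ⟨x, hx, hxy⟩ := hS.exists_eucNorm_sub_le y unit
  have norming : b ⬝ᵥ y = eucNorm b := by
    rw [hy, dotProduct_smul, ← eucNorm_sq_eq_dotProduct, smul_eq_mul]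
    field_simp
  have bound : eucNorm b ≤ eucNorm b / 2 + t := calc
    eucNorm b = b ⬝ᵥ (y - x) + b ⬝ᵥ x := by rw [← dotProduct_add, sub_add_cancel, norming]
    _ ≤ eucNorm b * eucNorm (y - x) + t :=
      add_le_add ((le_abs_self _).trans (abs_dotProduct_le _ _)) ((le_abs_self _).trans (h x hx))
    _ ≤ eucNorm b * (1 / 2) + t := by gcongr
    _ = _ := by ring
  linarith

lemma eucNorm_mulVec_le (hS : IsHalfNet S) (hA : A.IsSymm)
    (h : ∀ x ∈ polarizationPoints S, |x ⬝ᵥ A *ᵥ x| ≤ t)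
    (z : Fin d → ℝ) : eucNorm (A *ᵥ z) ≤ 8 * t * eucNorm z := by
  have on_net (x) (hx : x ∈ S) : eucNorm (A *ᵥ x) ≤ 2 * (2 * t) :=
    hS.eucNorm_le_two_mul fun y hy => by
      rw [← dotProduct_mulVec_comm hA]
      exact abs_dotProduct_mulVec_le_of_polarizationPoints hA h hx hy
  have := hS.eucNorm_le_two_mul (b := A *ᵥ z) (t := 4 * t * eucNorm z) fun x hx => by
    rw [dotProduct_comm, dotProduct_mulVec_comm hA]
    refine (abs_dotProduct_le _ _).trans ?_
    linarith [mul_le_mul_of_nonneg_right (on_net x hx) (eucNorm_nonneg z)]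
  linarith

end IsHalfNet

end Net

/-! ### Perturbation of the leading eigenvector -/

section Neumann

lemma abs_le_of_neumann (K : ℕ) {T : ℕ → ℝ} {Λ D W : ℝ} (hΛ : 0 < Λ) (hD : 0 ≤ D)
    (hstep : ∀ k < K, Λ * |T k| ≤ (Λ / 4) ^ k * D + |T (k + 1)|)
    (hlast : |T K| ≤ (Λ / 4) ^ K * W) : Λ * |T 0| ≤ 2 * D + Λ * W / 4 ^ K := by
  induction K generalizing T D W with
  | zero =>
    simp only [pow_zero, one_mul, div_one] at hlast ⊢
    nlinarith
  | succ K ih =>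
    have shifted := ih (T := fun k => T (k + 1)) (D := Λ / 4 * D) (W := Λ / 4 * W) (by positivity)
      (fun k hk => by
        have := hstep (k + 1) (by omega)
        rw [pow_succ] at this
        linarith) (by rw [pow_succ] at hlast; linarith)
    have first := hstep 0 (by omega)
    simp only [zero_add, pow_zero, one_mul] at shifted first
    have tail : |T 1| ≤ D / 2 + Λ * W / 4 ^ (K + 1) := by
      refine le_of_mul_le_mul_left (shifted.trans_eq ?_) hΛ
      rw [pow_succ]
      field_simp
      ring
    linarith

lemma abs_dotProduct_le_of_smul_eq_add_mulVec {d : ℕ} {H : Matrix (Fin d) (Fin d) ℝ}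
    {x w c : Fin d → ℝ} {μ D W : ℝ} {K : ℕ} (hμ : μ ≠ 0) (hD : 0 ≤ D)
    (hw : μ • w = c + H *ᵥ w) (hc : ∀ k < K, |x ⬝ᵥ H ^ k *ᵥ c| ≤ (|μ| / 4) ^ k * D)
    (hlast : |x ⬝ᵥ H ^ K *ᵥ w| ≤ (|μ| / 4) ^ K * W) :
    |μ| * |x ⬝ᵥ w| ≤ 2 * D + |μ| * W / 4 ^ K := by
  have hstep (k) (hk : k < K) :
      |μ| * |x ⬝ᵥ H ^ k *ᵥ w| ≤ (|μ| / 4) ^ k * D + |x ⬝ᵥ H ^ (k + 1) *ᵥ w| := by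
    have expand : μ * (x ⬝ᵥ H ^ k *ᵥ w) = x ⬝ᵥ H ^ k *ᵥ c + x ⬝ᵥ H ^ (k + 1) *ᵥ w := by
      rw [← smul_eq_mul, ← dotProduct_smul, ← mulVec_smul, hw, mulVec_add, dotProduct_add,
        mulVec_mulVec, pow_succ]
    rw [← abs_mul, expand]
    exact (abs_add_le _ _).trans (by gcongr; exact hc k hk)
  simpa only [pow_zero, one_mulVec] using
    abs_le_of_neumann K (T := fun k => x ⬝ᵥ H ^ k *ᵥ w) (abs_pos.2 hμ) hD hstep hlast

lemma eucNorm_pow_mulVec_le {d : ℕ} {H : Matrix (Fin d) (Fin d) ℝ} {r : ℝ} (hr : 0 ≤ r)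
    (h : ∀ x, eucNorm (H *ᵥ x) ≤ r * eucNorm x) (k : ℕ) (x : Fin d → ℝ) :
    eucNorm (H ^ k *ᵥ x) ≤ r ^ k * eucNorm x := by
  induction k generalizing x with
  | zero => simp
  | succ k ih =>
    calc eucNorm (H ^ (k + 1) *ᵥ x) = eucNorm (H ^ k *ᵥ (H *ᵥ x)) := by
          rw [pow_succ, mulVec_mulVec]
      _ ≤ r ^ k * eucNorm (H *ᵥ x) := ih _
      _ ≤ r ^ k * (r * eucNorm x) := by gcongr; exact h x
      _ = r ^ (k + 1) * eucNorm x := by ring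

end Neumann

section LeadingEigen

variable {N n : ℕ}

lemma isHermitian_specMat (Y : Matrix (Fin N) (Fin n) ℝ) : (specMat Y).IsHermitian := by
  rw [IsHermitian, conjTranspose_eq_transpose_of_trivial]
  simp only [specMat, transpose_sub, transpose_sum, transpose_smul, transpose_one,
    transpose_vecMulVec]

lemma exists_diag_eq_sum_eigenvalues_mul {M : Matrix (Fin n) (Fin n) ℝ} (hM : M.IsHermitian)
    (i : Fin n) : ∃ p : Fin n → ℝ, (∀ k, 0 ≤ p k) ∧ ∑ k, p k = 1 ∧
      M i i = ∑ k, hM.eigenvalues k * p k := by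
  set U := (hM.eigenvectorUnitary : Matrix (Fin n) (Fin n) ℝ) with hU
  refine ⟨fun k => U i k ^ 2, fun k => sq_nonneg _, ?_, ?_⟩
  · have row_unit := congrFun (congrFun (mem_unitaryGroup_iff.1 hM.eigenvectorUnitary.2) i) i
    rw [← hU, Matrix.mul_apply, one_apply_eq] at row_unit
    rw [← row_unit]
    exact Finset.sum_congr rfl fun k _ => by rw [star_apply, star_trivial]; exact sq _
  · conv_lhs => rw [hM.spectral_theorem]
    rw [Unitary.conjStarAlgAut_apply, Matrix.mul_apply]
    refine Finset.sum_congr rfl fun k _ => ?_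
    simp [Matrix.mul_diagonal, ← hU]
    ring

lemma abs_diag_le_of_eigenvalues_le {M : Matrix (Fin n) (Fin n) ℝ} (hM : M.IsHermitian) {c : ℝ}
    (h : ∀ μ' : ℝ, (∃ w : Fin n → ℝ, w ≠ 0 ∧ M *ᵥ w = μ' • w) → |μ'| ≤ c) (i : Fin n) :
    |M i i| ≤ c := by
  have eigenvalue_le (k) : |hM.eigenvalues k| ≤ c := by
    refine h _ ⟨hM.eigenvectorBasis k, fun h0 => ?_, hM.mulVec_eigenvectorBasis k⟩
    refine hM.eigenvectorBasis.orthonormal.ne_zero k ?_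
    ext l
    exact congrFun h0 l
  obtain ⟨p, hp, hp1, hM'⟩ := exists_diag_eq_sum_eigenvalues_mul hM i
  calc |M i i| ≤ ∑ k, |hM.eigenvalues k * p k| := hM' ▸ Finset.abs_sum_le_sum_abs _ _
    _ ≤ ∑ k, c * p k := Finset.sum_le_sum fun k _ => by
        rw [abs_mul, abs_of_nonneg (hp k)]
        exact mul_le_mul_of_nonneg_right (eigenvalue_le k) (hp k)
    _ = c := by rw [← Finset.mul_sum, hp1, mul_one]

lemma specMat_mul_orthogonal (Y : Matrix (Fin N) (Fin n) ℝ) {Q : Matrix (Fin n) (Fin n) ℝ}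
    (hQ : Qᵀ * Q = 1) : specMat (Y * Q) = Qᵀ * specMat Y * Q := by
  have hQ' : Q * Qᵀ = 1 := mul_eq_one_comm.1 hQ
  have row (i) : (Y * Q) i = Y i ᵥ* Q := by
    ext k
    simp [Matrix.mul_apply, vecMul, dotProduct]
  have row_norm (i) : ∑ j, (Y * Q) i j ^ 2 = ∑ j, Y i j ^ 2 := by
    rw [sum_sq_eq_dotProduct, sum_sq_eq_dotProduct, row, ← dotProduct_mulVec, ← vecMul_transpose,
      vecMul_vecMul, hQ', vecMul_one]
  have row_outer (i) :
      vecMulVec ((Y * Q) i) ((Y * Q) i) = Qᵀ * vecMulVec (Y i) (Y i) * Q := by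
    rw [row, mul_vecMulVec, vecMulVec_mul, mulVec_transpose]
  simp only [specMat, row_norm, row_outer, Matrix.mul_sub, Matrix.sub_mul, Matrix.mul_sum,
    Matrix.sum_mul, Matrix.mul_smul, Matrix.smul_mul, Matrix.mul_one, hQ]

lemma isLeadingEigen_of_conj {M Q : Matrix (Fin n) (Fin n) ℝ} (hQ : Qᵀ * Q = 1) {u : Fin n → ℝ}
    (hu : IsLeadingEigen (Qᵀ * M * Q) u) : IsLeadingEigen M (Q *ᵥ u) := by
  have hQ' : Q * Qᵀ = 1 := mul_eq_one_comm.1 hQ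
  obtain ⟨unit, μ, eigen, leading⟩ := hu
  refine ⟨?_, μ, ?_, fun μ' ⟨w, hw, hw'⟩ => leading μ' ⟨Qᵀ *ᵥ w, fun h0 => hw ?_, ?_⟩⟩
  · have sq_eq : eucNorm (Q *ᵥ u) ^ 2 = eucNorm u ^ 2 := by
      rw [eucNorm_sq_eq_dotProduct, eucNorm_sq_eq_dotProduct, dotProduct_mulVec,
        ← mulVec_transpose, mulVec_mulVec, hQ, one_mulVec]
    rw [unit, one_pow] at sq_eq
    exact (pow_eq_one_iff_of_nonneg (eucNorm_nonneg _) two_ne_zero).1 sq_eq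
  · have := congrArg (Q *ᵥ ·) eigen
    simp only [mulVec_mulVec, mulVec_smul] at this
    rwa [← Matrix.mul_assoc, ← Matrix.mul_assoc, hQ', Matrix.one_mul, ← mulVec_mulVec] at this
  · have := congrArg (Q *ᵥ ·) h0
    simpa only [mulVec_mulVec, hQ', one_mulVec, mulVec_zero] using this
  · rw [mulVec_mulVec, Matrix.mul_assoc, hQ', Matrix.mul_one, ← mulVec_mulVec, hw', mulVec_smul]

end LeadingEigen

section Blocks

variable {N d : ℕ}

/-- The weight `‖y_i‖² - (n-1)/N` of a row `y_i = (a, x)` in the spectral matrix, with `d = n - 1`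
and `s = 1/N`. -/
noncomputable def weight (s a : ℝ) (x : Fin d → ℝ) : ℝ := a ^ 2 + dev d s x

/-- The first column of the spectral matrix of the rows `(v i, g i)`, without its top entry. -/
noncomputable def crossVec (s : ℝ) (v : Fin N → ℝ) (g : Fin N → Fin d → ℝ) : Fin d → ℝ :=
  ∑ i, (weight s (v i) (g i) * v i) • g i

/-- The spectral matrix of the rows `(v i, g i)` without its first row and column. -/
noncomputable def restMat (s : ℝ) (v : Fin N → ℝ) (g : Fin N → Fin d → ℝ) :
    Matrix (Fin d) (Fin d) ℝ :=
  ∑ i, weight s (v i) (g i) • vecMulVec (g i) (g i) - (3 * s) • 1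

/-- The leave-one-out version of `crossVec`: the contribution of row `j` is removed, which makes
it independent of `g j`. -/
noncomputable def looVec (s : ℝ) (v : Fin N → ℝ) (g : Fin N → Fin d → ℝ) (j : Fin N) : Fin d → ℝ :=
  crossVec s v g - (weight s (v j) (g j) * v j) • g j

/-- The leave-one-out version of `restMat`: the contribution of row `j` is removed, which makes
it independent of `g j`. -/
noncomputable def looMat (s : ℝ) (v : Fin N → ℝ) (g : Fin N → Fin d → ℝ) (j : Fin N) :
    Matrix (Fin d) (Fin d) ℝ :=
  restMat s v g - weight s (v j) (g j) • vecMulVec (g j) (g j)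

lemma looMat_mulVec (s : ℝ) (v : Fin N → ℝ) (g : Fin N → Fin d → ℝ) (j : Fin N) (x : Fin d → ℝ) :
    looMat s v g j *ᵥ x =
      restMat s v g *ᵥ x - (weight s (v j) (g j) * (g j ⬝ᵥ x)) • g j := by
  rw [looMat, sub_mulVec, smul_mulVec, vecMulVec_mulVec, op_smul_eq_smul, smul_smul]

lemma gaussBasis_apply_zero (v : Fin N → ℝ) (g : Fin N → Fin d → ℝ) (i : Fin N) :
    gaussBasis (n := d + 1) v g i 0 = v i := by simp [gaussBasis, rowCat]

lemma gaussBasis_apply_succ (v : Fin N → ℝ) (g : Fin N → Fin d → ℝ) (i : Fin N) (k : Fin d) :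
    gaussBasis (n := d + 1) v g i k.succ = g i k := by simp [gaussBasis, rowCat]

lemma gaussBasis_dotProduct (v : Fin N → ℝ) (g : Fin N → Fin d → ℝ) (i : Fin N)
    (u : Fin (d + 1) → ℝ) :
    gaussBasis (n := d + 1) v g i ⬝ᵥ u = v i * u 0 + g i ⬝ᵥ Fin.tail u := by
  simp only [dotProduct, Fin.sum_univ_succ, gaussBasis_apply_zero, gaussBasis_apply_succ, Fin.tail]

lemma specMat_mulVec {n : ℕ} (Y : Matrix (Fin N) (Fin n) ℝ) (u : Fin n → ℝ) :
    specMat Y *ᵥ u = ∑ i, (((∑ j, (Y i j) ^ 2) - ((n : ℝ) - 1) / N) * (Y i ⬝ᵥ u)) • Y i -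
      (3 / (N : ℝ)) • u := by
  simp only [specMat, sub_mulVec, sum_mulVec, smul_mulVec, vecMulVec_mulVec, one_mulVec,
    op_smul_eq_smul, smul_smul]

lemma specMat_gaussBasis_mulVec (v : Fin N → ℝ) (g : Fin N → Fin d → ℝ) (u : Fin (d + 1) → ℝ) :
    specMat (gaussBasis (n := d + 1) v g) *ᵥ u =
      ∑ i, (weight (N : ℝ)⁻¹ (v i) (g i) * (v i * u 0 + g i ⬝ᵥ Fin.tail u)) •
        gaussBasis (n := d + 1) v g i - (3 * (N : ℝ)⁻¹) • u := by
  rw [specMat_mulVec]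
  congr 1
  refine Finset.sum_congr rfl fun i _ => ?_
  rw [gaussBasis_dotProduct]
  congr 2
  simp only [Fin.sum_univ_succ, gaussBasis_apply_zero, gaussBasis_apply_succ, weight, dev]
  push_cast
  ring

lemma specMat_gaussBasis_mulVec_zero (v : Fin N → ℝ) (g : Fin N → Fin d → ℝ)
    (u : Fin (d + 1) → ℝ) :
    (specMat (gaussBasis (n := d + 1) v g) *ᵥ u) 0 =
      (∑ i, weight (N : ℝ)⁻¹ (v i) (g i) * v i ^ 2 - 3 * (N : ℝ)⁻¹) * u 0 +
        crossVec (N : ℝ)⁻¹ v g ⬝ᵥ Fin.tail u := by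
  rw [specMat_gaussBasis_mulVec]
  simp only [Pi.sub_apply, Finset.sum_apply, Pi.smul_apply, smul_eq_mul, gaussBasis_apply_zero,
    crossVec, sum_dotProduct, smul_dotProduct, sub_mul, Finset.sum_mul]
  rw [sub_add_eq_add_sub, ← Finset.sum_add_distrib]
  congr 1
  exact Finset.sum_congr rfl fun i _ => by ring

lemma tail_specMat_gaussBasis_mulVec (v : Fin N → ℝ) (g : Fin N → Fin d → ℝ)
    (u : Fin (d + 1) → ℝ) :
    Fin.tail (specMat (gaussBasis (n := d + 1) v g) *ᵥ u) =
      u 0 • crossVec (N : ℝ)⁻¹ v g + restMat (N : ℝ)⁻¹ v g *ᵥ Fin.tail u := by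
  rw [specMat_gaussBasis_mulVec, restMat, sub_mulVec, sum_mulVec]
  ext k
  simp only [Fin.tail, Pi.sub_apply, Pi.add_apply, Finset.sum_apply, Pi.smul_apply, smul_eq_mul,
    gaussBasis_apply_succ, crossVec, smul_mulVec, vecMulVec_mulVec, one_mulVec, Finset.mul_sum,
    op_smul_eq_smul]
  rw [← add_sub_assoc, ← Finset.sum_add_distrib]
  congr 1
  exact Finset.sum_congr rfl fun i _ => by ring

lemma specMat_gaussBasis_zero_zero (v : Fin N → ℝ) (g : Fin N → Fin d → ℝ) :
    specMat (gaussBasis (n := d + 1) v g) 0 0 =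
      ∑ i, weight (N : ℝ)⁻¹ (v i) (g i) * v i ^ 2 - 3 * (N : ℝ)⁻¹ := by
  have tail_single : Fin.tail (Pi.single 0 1 : Fin (d + 1) → ℝ) = 0 := by
    ext k
    simp [Fin.tail]
  have := specMat_gaussBasis_mulVec_zero v g (Pi.single 0 1)
  rwa [mulVec_single_one, tail_single, dotProduct_zero, add_zero, Pi.single_eq_same, mul_one,
    col_apply] at this

/-- The spectral matrix of the rows `(v i, g i)` deviates blockwise by at most `ε` from
`diag(β, 0, …, 0)`, single rows contribute at most `ε`, and each row is incoherent at level `κ`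
with the Krylov vectors of its leave-one-out matrix. -/
structure IsSmallPerturbation (s : ℝ) (v : Fin N → ℝ) (g : Fin N → Fin d → ℝ) (β ε κ : ℝ) :
    Prop where
  diag_le : |∑ i, weight s (v i) (g i) * v i ^ 2 - 3 * s - β| ≤ ε
  cross_le : eucNorm (crossVec s v g) ≤ ε
  rest_le : ∀ z, eucNorm (restMat s v g *ᵥ z) ≤ ε * eucNorm z
  weight_mul_sq_le : ∀ j, |weight s (v j) (g j)| * eucNorm (g j) ^ 2 ≤ ε
  weight_mul_le : ∀ j, |weight s (v j) (g j) * v j| * eucNorm (g j) ≤ ε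
  loo_le : ∀ j, ∀ k < N, |g j ⬝ᵥ looMat s v g j ^ k *ᵥ looVec s v g j| ≤
    κ * eucNorm (looMat s v g j ^ k *ᵥ looVec s v g j)
  row_le : ∀ j, eucNorm (g j) ≤ κ * 4 ^ N

namespace IsSmallPerturbation

variable {s β ε κ μ u₀ : ℝ} {v : Fin N → ℝ} {g : Fin N → Fin d → ℝ} {w : Fin d → ℝ}

lemma eps_nonneg (h : IsSmallPerturbation s v g β ε κ) : 0 ≤ ε := (abs_nonneg _).trans h.diag_le

lemma kappa_nonneg (h : IsSmallPerturbation s v g β ε κ) (j : Fin N) : 0 ≤ κ :=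
  nonneg_of_mul_nonneg_left ((eucNorm_nonneg _).trans (h.row_le j)) (by positivity)

lemma eucNorm_looMat_mulVec_le (h : IsSmallPerturbation s v g β ε κ) (j : Fin N)
    (x : Fin d → ℝ) : eucNorm (looMat s v g j *ᵥ x) ≤ 2 * ε * eucNorm x := by
  have row_part : eucNorm ((weight s (v j) (g j) * (g j ⬝ᵥ x)) • g j) ≤ ε * eucNorm x :=
    calc eucNorm ((weight s (v j) (g j) * (g j ⬝ᵥ x)) • g j)
        = |weight s (v j) (g j)| * |g j ⬝ᵥ x| * eucNorm (g j) := by rw [eucNorm_smul, abs_mul]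
      _ ≤ |weight s (v j) (g j)| * (eucNorm (g j) * eucNorm x) * eucNorm (g j) := by
          gcongr
          · exact eucNorm_nonneg _
          · exact abs_dotProduct_le _ _
      _ = |weight s (v j) (g j)| * eucNorm (g j) ^ 2 * eucNorm x := by ring
      _ ≤ ε * eucNorm x := by gcongr; exacts [eucNorm_nonneg _, h.weight_mul_sq_le j]
  rw [looMat_mulVec]
  linarith [eucNorm_sub_le (restMat s v g *ᵥ x) ((weight s (v j) (g j) * (g j ⬝ᵥ x)) • g j),
    h.rest_le x]

lemma eucNorm_looMat_pow_mulVec_le (h : IsSmallPerturbation s v g β ε κ) (j : Fin N) (k : ℕ)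
    (x : Fin d → ℝ) : eucNorm (looMat s v g j ^ k *ᵥ x) ≤ (2 * ε) ^ k * eucNorm x :=
  eucNorm_pow_mulVec_le (mul_nonneg zero_le_two h.eps_nonneg) (h.eucNorm_looMat_mulVec_le j) k x

lemma eucNorm_looVec_le (h : IsSmallPerturbation s v g β ε κ) (j : Fin N) :
    eucNorm (looVec s v g j) ≤ 2 * ε := by
  refine (eucNorm_sub_le _ _).trans ?_
  rw [eucNorm_smul]
  linarith [h.cross_le, h.weight_mul_le j]

lemma abs_dotProduct_looMat_pow_le (h : IsSmallPerturbation s v g β ε κ) (j : Fin N)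
    (hu₀ : |u₀| ≤ 1) (z : ℝ) {k : ℕ} (hk : k < N) :
    |g j ⬝ᵥ looMat s v g j ^ k *ᵥ (u₀ • looVec s v g j + (weight s (v j) (g j) * z) • g j)| ≤
      (2 * ε) ^ k * (2 * ε * κ + ε * |z|) := by
  have hε := h.eps_nonneg
  set H := looMat s v g j
  set a := weight s (v j) (g j)
  have expand : g j ⬝ᵥ H ^ k *ᵥ (u₀ • looVec s v g j + (a * z) • g j) =
      u₀ * (g j ⬝ᵥ H ^ k *ᵥ looVec s v g j) + z * (a * (g j ⬝ᵥ H ^ k *ᵥ g j)) := by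
    rw [mulVec_add, dotProduct_add, mulVec_smul, mulVec_smul, dotProduct_smul, dotProduct_smul,
      smul_eq_mul, smul_eq_mul]
    ring
  have loo_part : |g j ⬝ᵥ H ^ k *ᵥ looVec s v g j| ≤ (2 * ε) ^ k * (2 * ε * κ) :=
    calc |g j ⬝ᵥ H ^ k *ᵥ looVec s v g j| ≤ κ * eucNorm (H ^ k *ᵥ looVec s v g j) := h.loo_le j k hk
      _ ≤ κ * ((2 * ε) ^ k * eucNorm (looVec s v g j)) := by
          gcongr
          exacts [h.kappa_nonneg j, h.eucNorm_looMat_pow_mulVec_le j k _]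
      _ ≤ κ * ((2 * ε) ^ k * (2 * ε)) := by
          gcongr
          exacts [h.kappa_nonneg j, h.eucNorm_looVec_le j]
      _ = (2 * ε) ^ k * (2 * ε * κ) := by ring
  have row_part : |a * (g j ⬝ᵥ H ^ k *ᵥ g j)| ≤ (2 * ε) ^ k * ε :=
    calc |a * (g j ⬝ᵥ H ^ k *ᵥ g j)| ≤ |a| * (eucNorm (g j) * eucNorm (H ^ k *ᵥ g j)) := by
          rw [abs_mul]
          gcongr
          exact abs_dotProduct_le _ _
      _ ≤ |a| * (eucNorm (g j) * ((2 * ε) ^ k * eucNorm (g j))) := by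
          gcongr
          exacts [eucNorm_nonneg _, h.eucNorm_looMat_pow_mulVec_le j k _]
      _ = (2 * ε) ^ k * (|a| * eucNorm (g j) ^ 2) := by ring
      _ ≤ (2 * ε) ^ k * ε := by gcongr; exact h.weight_mul_sq_le j
  rw [expand]
  refine (abs_add_le _ _).trans ?_
  rw [abs_mul, abs_mul z]
  have := mul_le_mul hu₀ loo_part (abs_nonneg _) zero_le_one
  have := mul_le_mul_of_nonneg_left row_part (abs_nonneg z)
  linarith

lemma smul_eq_loo (j : Fin N) (hw : μ • w = u₀ • crossVec s v g + restMat s v g *ᵥ w) :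
    μ • w = u₀ • looVec s v g j +
      (weight s (v j) (g j) * (v j * u₀ + g j ⬝ᵥ w)) • g j + looMat s v g j *ᵥ w := by
  rw [hw, looMat_mulVec, looVec]
  ext k
  simp only [Pi.add_apply, Pi.sub_apply, Pi.smul_apply, smul_eq_mul]
  ring

lemma abs_eigenvalue_mul_abs_dotProduct_le (h : IsSmallPerturbation s v g β ε κ) (j : Fin N)
    (hμ : 8 * ε ≤ |μ|) (hμ0 : μ ≠ 0) (hu₀ : |u₀| ≤ 1)
    (hw : μ • w = u₀ • crossVec s v g + restMat s v g *ᵥ w) :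
    |μ| * |g j ⬝ᵥ w| ≤
      2 * (2 * ε * κ + ε * |v j * u₀ + g j ⬝ᵥ w|) + |μ| * (κ * eucNorm w) := by
  have hε := h.eps_nonneg
  have hκ := h.kappa_nonneg j
  have ratio : 2 * ε ≤ |μ| / 4 := by linarith
  set z := v j * u₀ + g j ⬝ᵥ w
  refine (abs_dotProduct_le_of_smul_eq_add_mulVec (K := N) (W := eucNorm (g j) * eucNorm w) hμ0
    (by positivity : 0 ≤ 2 * ε * κ + ε * |z|) (smul_eq_loo j hw) (fun k hk => ?_) ?_).trans ?_
  · exact (h.abs_dotProduct_looMat_pow_le j hu₀ z hk).trans (by gcongr)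
  · calc |g j ⬝ᵥ looMat s v g j ^ N *ᵥ w|
        ≤ eucNorm (g j) * eucNorm (looMat s v g j ^ N *ᵥ w) := abs_dotProduct_le _ _
      _ ≤ eucNorm (g j) * ((|μ| / 4) ^ N * eucNorm w) := by
          have := eucNorm_nonneg w
          gcongr
          · exact eucNorm_nonneg _
          · exact (h.eucNorm_looMat_pow_mulVec_le j N w).trans (by gcongr)
      _ = (|μ| / 4) ^ N * (eucNorm (g j) * eucNorm w) := by ring
  · have row : eucNorm (g j) * eucNorm w / 4 ^ N ≤ κ * eucNorm w := by
      rw [div_le_iff₀ (by positivity)]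
      linarith [mul_le_mul_of_nonneg_right (h.row_le j) (eucNorm_nonneg w)]
    rw [mul_div_assoc]
    gcongr

lemma abs_mul_abs_dotProduct_le (h : IsSmallPerturbation s v g β ε κ) (hβ : 64 * ε ≤ |β|)
    (hβ0 : β ≠ 0) (hμ : |β| / 2 ≤ |μ|) (hu₀ : |u₀| ≤ 1)
    (hw : μ • w = u₀ • crossVec s v g + restMat s v g *ᵥ w) (hwβ : |β| * eucNorm w ≤ 4 * ε)
    (j : Fin N) : |β| * |g j ⬝ᵥ w| ≤ 8 * ε * |v j| + 16 * ε * κ := by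
  have hε := h.eps_nonneg
  have hκ := h.kappa_nonneg j
  have hβpos := abs_pos.2 hβ0
  have entry_le : |v j * u₀ + g j ⬝ᵥ w| ≤ |v j| + |g j ⬝ᵥ w| := by
    refine (abs_add_le _ _).trans ?_
    rw [abs_mul]
    linarith [mul_le_mul_of_nonneg_left hu₀ (abs_nonneg (v j))]
  have neumann := h.abs_eigenvalue_mul_abs_dotProduct_le j (by linarith)
    (abs_pos.1 (by linarith)) hu₀ hw
  set y := |g j ⬝ᵥ w|
  have excess : |β| / 2 * (y - κ * eucNorm w) ≤ 4 * ε * κ + 2 * ε * |v j| + 2 * ε * y := by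
    rcases le_or_gt 0 (y - κ * eucNorm w) with hy | hy
    · linarith [mul_le_mul_of_nonneg_right hμ hy, mul_le_mul_of_nonneg_left entry_le hε]
    · have : 0 ≤ 4 * ε * κ + 2 * ε * |v j| + 2 * ε * y := by positivity
      nlinarith
  have : κ * (|β| * eucNorm w) ≤ κ * (4 * ε) := by gcongr
  have := mul_le_mul_of_nonneg_right hβ (abs_nonneg (g j ⬝ᵥ w))
  have : 0 ≤ ε * |v j| := by positivity
  have : 0 ≤ ε * κ := by positivity
  linarith

lemma half_le_abs_eigenvalue (h : IsSmallPerturbation (N : ℝ)⁻¹ v g β ε κ) (hβ : 64 * ε ≤ |β|)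
    (hlead : ∀ μ' : ℝ, (∃ w, w ≠ 0 ∧ specMat (gaussBasis (n := d + 1) v g) *ᵥ w = μ' • w) →
      |μ'| ≤ |μ|) : |β| / 2 ≤ |μ| := by
  have diag_le := abs_diag_le_of_eigenvalues_le (isHermitian_specMat _) hlead 0
  rw [specMat_gaussBasis_zero_zero] at diag_le
  have := (abs_sub_comm _ _).trans_le h.diag_le
  linarith [(abs_sub_abs_le_abs_sub β _).trans this, h.eps_nonneg]

lemma abs_mul_eucNorm_tail_le (h : IsSmallPerturbation s v g β ε κ) (hμ : |β| / 2 ≤ |μ|)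
    (hu₀ : |u₀| ≤ 1) (hw1 : eucNorm w ≤ 1)
    (hw : μ • w = u₀ • crossVec s v g + restMat s v g *ᵥ w) : |β| * eucNorm w ≤ 4 * ε := by
  have hε := h.eps_nonneg
  have hw0 := eucNorm_nonneg w
  have upper : |μ| * eucNorm w ≤ 2 * ε :=
    calc |μ| * eucNorm w = eucNorm (u₀ • crossVec s v g + restMat s v g *ᵥ w) := by
          rw [← eucNorm_smul, hw]
      _ ≤ |u₀| * eucNorm (crossVec s v g) + eucNorm (restMat s v g *ᵥ w) := by
          rw [← eucNorm_smul]
          exact eucNorm_add_le _ _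
      _ ≤ 1 * ε + ε * 1 := by
          gcongr
          exacts [eucNorm_nonneg _, h.cross_le, (h.rest_le w).trans (by gcongr)]
      _ = 2 * ε := by ring
  linarith [mul_le_mul_of_nonneg_right hμ hw0]

end IsSmallPerturbation

lemma sq_add_eucNorm_tail_sq (u : Fin (d + 1) → ℝ) :
    u 0 ^ 2 + eucNorm (Fin.tail u) ^ 2 = eucNorm u ^ 2 := by
  rw [eucNorm_sq, eucNorm_sq, Fin.sum_univ_succ]
  rfl

lemma exists_sign_mul_eq_abs (a : ℝ) : ∃ σ : ℝ, (σ = 1 ∨ σ = -1) ∧ σ * a = |a| := by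
  rcases le_total 0 a with ha | ha
  · exact ⟨1, Or.inl rfl, by rw [one_mul, abs_of_nonneg ha]⟩
  · exact ⟨-1, Or.inr rfl, by rw [neg_one_mul, abs_of_nonpos ha]⟩

lemma IsSmallPerturbation.exists_sign_entrywise_le {v : Fin N → ℝ} {g : Fin N → Fin d → ℝ}
    {β ε κ : ℝ} (h : IsSmallPerturbation (N : ℝ)⁻¹ v g β ε κ) (hβ : 64 * ε ≤ |β|) (hβ0 : β ≠ 0)
    {u : Fin (d + 1) → ℝ} (hu : IsLeadingEigen (specMat (gaussBasis (n := d + 1) v g)) u) :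
    ∃ σ : ℝ, (σ = 1 ∨ σ = -1) ∧ ∀ j : Fin N,
      |β| * |σ * (gaussBasis (n := d + 1) v g *ᵥ u) j - v j| ≤ 20 * ε * (|v j| + κ) := by
  obtain ⟨unit, μ, eigen, leading⟩ := hu
  set w := Fin.tail u
  have norm_split : u 0 ^ 2 + eucNorm w ^ 2 = 1 := by rw [sq_add_eucNorm_tail_sq, unit, one_pow]
  have hw0 := eucNorm_nonneg w
  have hw1 : eucNorm w ≤ 1 := by nlinarith [sq_nonneg (u 0)]
  have hu0 : |u 0| ≤ 1 := (sq_le_one_iff_abs_le_one _).1 (by nlinarith)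
  have hμ := h.half_le_abs_eigenvalue hβ leading
  have tail_eigen : μ • w = u 0 • crossVec (N : ℝ)⁻¹ v g + restMat (N : ℝ)⁻¹ v g *ᵥ w := by
    rw [← tail_specMat_gaussBasis_mulVec, eigen]
    rfl
  have tail_le := h.abs_mul_eucNorm_tail_le hμ hu0 hw1 tail_eigen
  obtain ⟨σ, hσ, hσu⟩ := exists_sign_mul_eq_abs (u 0)
  refine ⟨σ, hσ, fun j => ?_⟩
  have hσ1 : |σ| = 1 := by rcases hσ with rfl | rfl <;> simp
  have row : (gaussBasis (n := d + 1) v g *ᵥ u) j = v j * u 0 + g j ⬝ᵥ w :=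
    gaussBasis_dotProduct v g j u
  have entry : |σ * (gaussBasis (n := d + 1) v g *ᵥ u) j - v j| ≤
      eucNorm w * |v j| + |g j ⬝ᵥ w| := by
    have defect : 1 - |u 0| ≤ eucNorm w := by nlinarith [sq_abs (u 0), abs_nonneg (u 0)]
    rw [row, show σ * (v j * u 0 + g j ⬝ᵥ w) - v j = (|u 0| - 1) * v j + σ * (g j ⬝ᵥ w) by
      rw [← hσu]; ring]
    refine (abs_add_le _ _).trans ?_
    rw [abs_mul, abs_mul, hσ1, one_mul, abs_of_nonpos (by linarith : |u 0| - 1 ≤ 0)]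
    gcongr
    linarith
  have tail_dot := h.abs_mul_abs_dotProduct_le hβ hβ0 hμ hu0 tail_eigen tail_le j
  have := mul_le_mul_of_nonneg_left entry (abs_nonneg β)
  have := mul_le_mul_of_nonneg_right tail_le (abs_nonneg (v j))
  have : 0 ≤ ε * |v j| := mul_nonneg h.eps_nonneg (abs_nonneg _)
  have : 0 ≤ ε * κ := mul_nonneg h.eps_nonneg (h.kappa_nonneg j)
  linarith

end Blocks

/-! ### Deviation of the individual sums -/

section Independence

lemma measure_pi_mem_le_of_update_eq {N : ℕ} {E F : Type*} [MeasurableSpace E] [MeasurableSpace F]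
    {μ : Measure E} [IsProbabilityMeasure μ] (j : Fin N) (a : E) {W : (Fin N → E) → F}
    (hW : Measurable W) (hWj : ∀ g, W (Function.update g j a) = W g) {S : Set (E × F)}
    (hS : MeasurableSet S) {q : ENNReal} (hq : ∀ w, μ {x | (x, w) ∈ S} ≤ q) :
    Measure.pi (fun _ : Fin N => μ) {g | (g j, W g) ∈ S} ≤ q := by
  obtain ⟨M, rfl⟩ : ∃ M, N = M + 1 := ⟨N - 1, by have := j.pos; omega⟩
  have split := measurePreserving_piFinSuccAbove (fun _ : Fin (M + 1) => μ) j
  set e := MeasurableEquiv.piFinSuccAbove (fun _ : Fin (M + 1) => E) j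
  set W' : (Fin M → E) → F := fun b => W (e.symm (a, b))
  have hW' : Measurable W' := hW.comp (e.symm.measurable.comp measurable_prodMk_left)
  have W_eq (g) : W g = W' (e g).2 := by
    rw [← hWj g]
    congr 1
    rw [MeasurableEquiv.eq_symm_apply]
    ext1
    · exact Function.update_self j a g
    · funext i
      exact Function.update_of_ne (Fin.succAbove_ne j i) a g
  have hT : MeasurableSet {p : E × (Fin M → E) | (p.1, W' p.2) ∈ S} :=
    hS.preimage (measurable_fst.prodMk (hW'.comp measurable_snd))
  have preimage_eq : {g : Fin (M + 1) → E | (g j, W g) ∈ S} =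
      e ⁻¹' {p : E × (Fin M → E) | (p.1, W' p.2) ∈ S} := by
    ext g
    exact iff_of_eq (congrArg (fun w => (g j, w) ∈ S) (W_eq g))
  rw [preimage_eq, split.measure_preimage hT.nullMeasurableSet, Measure.prod_apply_symm hT]
  refine (lintegral_mono fun b => hq (W' b)).trans ?_
  rw [lintegral_const, measure_univ, mul_one]

end Independence

section LeaveOneOut

variable {N d : ℕ} {v : Fin N → ℝ} {L : ℝ}

lemma measurable_looMat_pow_mulVec_looVec {s : ℝ} (j : Fin N) (k : ℕ) : Measurable
    fun g : Fin N → Fin d → ℝ => looMat s v g j ^ k *ᵥ looVec s v g j := by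
  have weight_cont (i) : Continuous fun g : Fin N → Fin d → ℝ => weight s (v i) (g i) := by
    unfold weight dev
    fun_prop
  have looMat_cont : Continuous fun g : Fin N → Fin d → ℝ => looMat s v g j := by
    unfold looMat restMat
    refine (Continuous.sub (continuous_finsetSum _ fun i _ => ?_) continuous_const).sub ?_
    · exact (weight_cont i).smul ((continuous_apply i).matrix_vecMulVec (continuous_apply i))
    · exact (weight_cont j).smul ((continuous_apply j).matrix_vecMulVec (continuous_apply j))
  have looVec_cont : Continuous fun g : Fin N → Fin d → ℝ => looVec s v g j := by
    unfold looVec crossVec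
    fun_prop
  exact ((looMat_cont.pow k).matrix_mulVec looVec_cont).measurable

lemma looMat_update (s : ℝ) (g : Fin N → Fin d → ℝ) (j : Fin N) :
    looMat s v (Function.update g j 0) j = looMat s v g j := by
  have sum_erase (g : Fin N → Fin d → ℝ) : looMat s v g j =
      ∑ i ∈ Finset.univ.erase j, weight s (v i) (g i) • vecMulVec (g i) (g i) - (3 * s) • 1 := by
    rw [looMat, restMat, ← Finset.add_sum_erase _ _ (Finset.mem_univ j)]
    abel
  rw [sum_erase, sum_erase]
  congr 1
  refine Finset.sum_congr rfl fun i hi => ?_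
  rw [Function.update_of_ne (Finset.ne_of_mem_erase hi)]

lemma looVec_update (s : ℝ) (g : Fin N → Fin d → ℝ) (j : Fin N) :
    looVec s v (Function.update g j 0) j = looVec s v g j := by
  have sum_erase (g : Fin N → Fin d → ℝ) : looVec s v g j =
      ∑ i ∈ Finset.univ.erase j, (weight s (v i) (g i) * v i) • g i := by
    rw [looVec, crossVec, ← Finset.add_sum_erase _ _ (Finset.mem_univ j)]
    abel
  rw [sum_erase, sum_erase]
  refine Finset.sum_congr rfl fun i hi => ?_
  rw [Function.update_of_ne (Finset.ne_of_mem_erase hi)]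

variable {s : NNReal}

lemma measure_dotProduct_gt_le (hs : 0 < s) (hL : 0 < L) (w : Fin d → ℝ) :
    gaussVec d s {g | 4 * √(L * s) * eucNorm w < |g ⬝ᵥ w|} ≤
      ENNReal.ofReal (2 * Real.exp (-(4 * L))) := by
  rcases (eucNorm_nonneg w).eq_or_lt with hw | hw
  · have empty : {g : Fin d → ℝ | 4 * √(L * s) * eucNorm w < |g ⬝ᵥ w|} = ∅ := by
      refine Set.eq_empty_of_forall_notMem fun g hg => ?_
      have lower : 4 * √(L * s) * eucNorm w < |g ⬝ᵥ w| := hg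
      have upper := abs_dotProduct_le g w
      rw [← hw, mul_zero] at lower upper
      exact absurd upper lower.not_ge
    rw [empty, measure_empty]
    exact zero_le
  · have hV : 4 * (4 * L) * (s * (∑ k, w k ^ 2) / 2) ≤ (4 * √(L * s) * eucNorm w) ^ 2 := by
      rw [mul_pow, mul_pow, Real.sq_sqrt (by positivity), eucNorm_sq]
      have : 0 ≤ L * s * ∑ k, w k ^ 2 := by positivity
      linarith
    refine (measure_mono fun g hg => ?_).trans (measure_abs_ge_le_of_hasMGFBound
      (by positivity) (by positivity) hV fun θ _ => hasMGFBound_dotProduct w θ)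
    have lower : 4 * √(L * s) * eucNorm w < |g ⬝ᵥ w| := hg
    exact lower.le

lemma measure_loo_dotProduct_gt_le (hs : 0 < s) (hL : 0 < L) (j : Fin N) (k : ℕ) :
    iidGaussVec N d s {g | 4 * √(L * s) * eucNorm (looMat s v g j ^ k *ᵥ looVec s v g j) <
      |g j ⬝ᵥ looMat s v g j ^ k *ᵥ looVec s v g j|} ≤
      ENNReal.ofReal (2 * Real.exp (-(4 * L))) := by
  have measurable_event : MeasurableSet
      {p : (Fin d → ℝ) × (Fin d → ℝ) | 4 * √(L * s) * eucNorm p.2 < |p.1 ⬝ᵥ p.2|} := by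
    refine measurableSet_lt ?_ ?_
    · unfold eucNorm; fun_prop
    · unfold dotProduct; fun_prop
  exact measure_pi_mem_le_of_update_eq j 0 (measurable_looMat_pow_mulVec_looVec j k)
    (fun g => by rw [looMat_update, looVec_update]) measurable_event
    (measure_dotProduct_gt_le hs hL)

end LeaveOneOut

section Scales

variable {N d n : ℕ} {s : NNReal} {v : Fin N → ℝ} {L τ t : ℝ}

/-- Lower bounds on the truncation level `τ` and on the deviation scale `t`, in terms of the
parameters of the model with `L = log (N/δ)`, under which every sum in the spectral matrix is
concentrated at scale `t`. The alternative in `two_le` is between a sub-Gaussian bound on the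
truncated deviations and a Bernstein bound. -/
structure Scales (N n : ℕ) (s : NNReal) (v : Fin N → ℝ) (L τ t : ℝ) : Prop where
  s_pos : 0 < s
  one_le_n : 1 ≤ n
  one_le_L : 1 ≤ L
  t_pos : 0 < t
  tau_pos : 0 < τ
  tau_sq : 4096 * n * L * (s : ℝ) ^ 2 ≤ τ ^ 2
  tau_le : 64 * L * s ≤ τ
  sup_le : ∀ i, 64 * (n + L) * v i ^ 2 * s ≤ t
  four_le : 2 ^ 13 * (n * L) * (∑ i, v i ^ 4) * (s : ℝ) ^ 2 ≤ t ^ 2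
  six_le : 8 * (n + L) * (∑ i, v i ^ 6) * s ≤ t ^ 2
  two_le : 64 * (n + L) * (∑ i, v i ^ 2) * τ ^ 2 * s ≤ t ^ 2 ∨
    2 ^ 28 * (n + L) * n * (∑ i, v i ^ 2) * (s : ℝ) ^ 3 ≤ t ^ 2 ∧
      ∀ i, 64 * (n + L) * |v i| * τ * √(s : ℝ) ≤ t
  zero_le : 2 ^ 28 * (n + L) * n * N * (s : ℝ) ^ 4 ≤ t ^ 2
  prod_le : 128 * (n + L) * τ * s ≤ t

lemma add_le_two_mul_mul {a b : ℝ} (ha : 1 ≤ a) (hb : 1 ≤ b) : a + b ≤ 2 * (a * b) := by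
  nlinarith [mul_nonneg (sub_nonneg.2 ha) (sub_nonneg.2 hb)]

lemma two_mul_div_mul_le {p t a r : ℝ} (ht : 0 < t) (h : 2 * p * a ≤ r * t) :
    2 * p / t * a ≤ r := by
  rwa [div_mul_eq_mul_div, div_le_iff₀ ht]

namespace Scales

lemma measure_dev (H : Scales N n s v L τ t) (hd : d ≤ n) :
    gaussVec d s {g | τ ≤ |dev d s g|} ≤ ENNReal.ofReal (2 * Real.exp (-(4 * L))) := by
  have hL := H.one_le_L
  refine measure_dev_ge_le H.s_pos H.tau_pos (by linarith) (H.tau_sq.trans' ?_)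
    (by linarith [H.tau_le])
  have : (d : ℝ) ≤ n := by exact_mod_cast hd
  calc 1024 * (4 * L) * d * (s : ℝ) ^ 2 = 4096 * d * L * (s : ℝ) ^ 2 := by ring
    _ ≤ 4096 * n * L * (s : ℝ) ^ 2 := by gcongr

lemma measure_sum_sq_mul_dev (H : Scales N n s v L τ t) (hd : d ≤ n) :
    iidGaussVec N d s {g | t ≤ |∑ i, v i ^ 2 * dev d s (g i)|} ≤
      ENNReal.ofReal (2 * Real.exp (-(4 * L))) := by
  have hL := H.one_le_L
  refine measure_abs_sum_ge_le (f := fun i g => v i ^ 2 * dev d s g)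
    (V := fun i => (v i ^ 2) ^ 2 * (256 * d * (s : ℝ) ^ 2)) H.t_pos (by linarith) ?_
    fun i θ hθ => ?_
  · have : (d : ℝ) ≤ n := by exact_mod_cast hd
    calc 4 * (4 * L) * ∑ i, (v i ^ 2) ^ 2 * (256 * d * (s : ℝ) ^ 2)
        = 4096 * (d * L) * (∑ i, v i ^ 4) * (s : ℝ) ^ 2 := by
          rw [← Finset.sum_mul]
          simp only [← pow_mul]
          ring
      _ ≤ 2 ^ 13 * (n * L) * (∑ i, v i ^ 4) * (s : ℝ) ^ 2 := by gcongr; norm_num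
      _ ≤ t ^ 2 := H.four_le
  · refine (hasMGFBound_dev H.s_pos ?_).const_mul
    rw [abs_mul, hθ, abs_of_nonneg (sq_nonneg _), mul_assoc]
    refine two_mul_div_mul_le H.t_pos ?_
    have : 0 ≤ n * v i ^ 2 * (s : ℝ) := by positivity
    linarith [H.sup_le i]

variable {x : Fin d → ℝ}

lemma measure_sum_cube_mul_dotProduct (H : Scales N n s v L τ t) (hx : ∑ k, x k ^ 2 ≤ 1) :
    iidGaussVec N d s {g | t ≤ |∑ i, v i ^ 3 * (g i ⬝ᵥ x)|} ≤
      ENNReal.ofReal (2 * Real.exp (-(4 * (n + L)))) := by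
  have hL := H.one_le_L
  refine measure_abs_sum_ge_le (f := fun i g => v i ^ 3 * (g ⬝ᵥ x))
    (V := fun i => (v i ^ 3) ^ 2 * (s * (∑ k, x k ^ 2) / 2)) H.t_pos (by positivity) ?_
    fun i θ _ => (hasMGFBound_dotProduct x _).const_mul
  calc 4 * (4 * (n + L)) * ∑ i, (v i ^ 3) ^ 2 * (s * (∑ k, x k ^ 2) / 2)
      = 8 * (n + L) * (∑ i, v i ^ 6) * s * ∑ k, x k ^ 2 := by
        rw [← Finset.sum_mul]
        simp only [← pow_mul]
        ring
    _ ≤ 8 * (n + L) * (∑ i, v i ^ 6) * s := mul_le_of_le_one_right (by positivity) hx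
    _ ≤ t ^ 2 := H.six_le

lemma integral_dev_pow_four_le (H : Scales N n s v L τ t) (hd : d ≤ n) :
    ∫ g, dev d s g ^ 4 ∂(gaussVec d s) ≤ 2 ^ 24 * (n : ℝ) ^ 2 * (s : ℝ) ^ 4 := by
  have : (d : ℝ) ≤ n := by exact_mod_cast hd
  exact (integral_dev_pow_four H.s_pos).2.trans (by gcongr)

lemma measure_sum_mul_truncDev_mul_dotProduct (H : Scales N n s v L τ t) (hd : d ≤ n)
    (hx : ∑ k, x k ^ 2 ≤ 1) :
    iidGaussVec N d s {g | t ≤ |∑ i, v i * (truncDev d s τ (g i) * (g i ⬝ᵥ x))|} ≤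
      ENNReal.ofReal (2 * Real.exp (-(4 * (n + L)))) := by
  have hL := H.one_le_L
  have hp : 0 < 4 * (n + L) := by positivity
  have hn : (0 : ℝ) < n := by exact_mod_cast H.one_le_n
  have sq_bound := hasExpSqBound_dotProduct H.s_pos hx
  have trunc_le := abs_truncDev_le (d := d) (s := s) H.tau_pos.le
  have mean_zero := integral_mul_dotProduct_eq_zero (s := s)
    (truncDev_neg (d := d) (s := s) (τ := τ)) x
  rcases H.two_le with h | ⟨h, hi⟩
  · refine measure_abs_sum_ge_le (f := fun i g => v i * (truncDev d s τ g * (g ⬝ᵥ x)))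
      (V := fun i => v i ^ 2 * (4 * (τ ^ 2 * s))) H.t_pos hp ?_ fun i θ _ =>
        ((sq_bound.bounded_mul measurable_truncDev H.tau_pos trunc_le).hasMGFBound
          mean_zero _).const_mul
    rw [← Finset.sum_mul]
    linarith
  · refine measure_abs_sum_ge_le (f := fun i g => v i * (truncDev d s τ g * (g ⬝ᵥ x)))
      (V := fun i => v i ^ 2 * (2 ^ 24 * n * (s : ℝ) ^ 3)) H.t_pos hp ?_ fun i θ hθ => ?_
    · rw [← Finset.sum_mul]
      linarith
    · refine (sq_bound.hasMGFBound_mul hn measurable_truncDev trunc_le abs_truncDev_le_abs_dev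
        (integral_dev_pow_four H.s_pos).1 (H.integral_dev_pow_four_le hd) mean_zero ?_).const_mul
      rw [abs_mul, hθ, mul_assoc, mul_assoc]
      refine two_mul_div_mul_le H.t_pos ?_
      linarith [hi i]

lemma measure_sum_sq_mul_dotProduct_sq_sub (H : Scales N n s v L τ t) (hx : ∑ k, x k ^ 2 ≤ 1) :
    iidGaussVec N d s {g | t ≤ |∑ i, v i ^ 2 * ((g i ⬝ᵥ x) ^ 2 - s * ∑ k, x k ^ 2)|} ≤
      ENNReal.ofReal (2 * Real.exp (-(4 * (n + L)))) := by
  have hL := H.one_le_L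
  have hn : (1 : ℝ) ≤ n := by exact_mod_cast H.one_le_n
  rw [← integral_dotProduct_sq]
  refine measure_abs_sum_ge_le
    (f := fun i g => v i ^ 2 * ((g ⬝ᵥ x) ^ 2 - ∫ g, (g ⬝ᵥ x) ^ 2 ∂(gaussVec d s)))
    (V := fun i => (v i ^ 2) ^ 2 * (256 * (s : ℝ) ^ 2)) H.t_pos (by positivity) ?_ fun i θ hθ => ?_
  · calc 4 * (4 * (n + L)) * ∑ i, (v i ^ 2) ^ 2 * (256 * (s : ℝ) ^ 2)
        = 2 ^ 12 * (n + L) * (∑ i, v i ^ 4) * (s : ℝ) ^ 2 := by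
          rw [← Finset.sum_mul]
          simp only [← pow_mul]
          ring
      _ ≤ 2 ^ 12 * (2 * (n * L)) * (∑ i, v i ^ 4) * (s : ℝ) ^ 2 := by
          gcongr
          exact add_le_two_mul_mul hn hL
      _ ≤ t ^ 2 := by linarith [H.four_le]
  · refine ((hasExpSqBound_dotProduct H.s_pos hx).hasMGFBound_sq_sub_integral ?_).const_mul
    rw [abs_mul, hθ, abs_of_nonneg (sq_nonneg _), mul_assoc]
    refine two_mul_div_mul_le H.t_pos ?_
    linarith [H.sup_le i]

lemma measure_sum_truncDev_mul_dotProduct_sq_sub (H : Scales N n s v L τ t) (hd : d ≤ n)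
    (hx : ∑ k, x k ^ 2 ≤ 1) :
    iidGaussVec N d s {g | t ≤ |∑ i, (truncDev d s τ (g i) * (g i ⬝ᵥ x) ^ 2 -
        ∫ y, truncDev d s τ y * (y ⬝ᵥ x) ^ 2 ∂(gaussVec d s))|} ≤
      ENNReal.ofReal (2 * Real.exp (-(4 * (n + L)))) := by
  have hL := H.one_le_L
  refine measure_abs_sum_ge_le
    (f := fun i g => truncDev d s τ g * (g ⬝ᵥ x) ^ 2 -
      ∫ y, truncDev d s τ y * (y ⬝ᵥ x) ^ 2 ∂(gaussVec d s))
    (V := fun i => 2 ^ 24 * n * (s : ℝ) ^ 4) H.t_pos (by positivity) ?_ fun _ θ hθ => ?_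
  · rw [Finset.sum_const, Finset.card_univ, Fintype.card_fin, nsmul_eq_mul]
    linarith [H.zero_le]
  · refine (hasExpSqBound_dotProduct H.s_pos hx).hasMGFBound_mul_sq_sub_integral
      (by exact_mod_cast H.one_le_n) measurable_truncDev (abs_truncDev_le H.tau_pos.le)
      abs_truncDev_le_abs_dev (integral_dev_pow_four H.s_pos).1 (H.integral_dev_pow_four_le hd) ?_
    rw [hθ, mul_assoc]
    refine two_mul_div_mul_le H.t_pos ?_
    linarith [H.prod_le]

end Scales

end Scales

/-! ### The good event -/

section GoodRows

variable {N d n : ℕ} {s : NNReal} {v : Fin N → ℝ} {L τ t : ℝ} {g : Fin N → Fin d → ℝ}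
  {S : Finset (Fin d → ℝ)} {x : Fin d → ℝ}

/-- The event that the Gaussian rows `g` deviate from their means by no more than the scale `t`
allows, stated for the pieces of the spectral matrix that enter `IsSmallPerturbation`. -/
structure GoodRows (n : ℕ) (s : NNReal) (v : Fin N → ℝ) (L τ t : ℝ) (g : Fin N → Fin d → ℝ) :
    Prop where
  abs_dev_le : ∀ i, |dev d s (g i)| ≤ τ
  diag_le : |∑ i, v i ^ 2 * dev d s (g i)| ≤ t
  cross_le : eucNorm (crossVec s v g) ≤ 4 * t
  rest_le : ∀ z, eucNorm (restMat s v g *ᵥ z) ≤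
    8 * (2 * t + 2 ^ 12 * (√(n : ℝ) * s * √(s : ℝ)) + |∑ i, v i ^ 2 - 1| * s) * eucNorm z
  loo_le : ∀ j, ∀ k < N, |g j ⬝ᵥ looMat s v g j ^ k *ᵥ looVec s v g j| ≤
    4 * √(L * s) * eucNorm (looMat s v g j ^ k *ᵥ looVec s v g j)

/-- The deviation estimates in finitely many directions from which a net argument recovers the
norm bounds `GoodRows.cross_le` and `GoodRows.rest_le`. -/
structure TestBounds (S : Finset (Fin d → ℝ)) (s : NNReal) (v : Fin N → ℝ) (τ t : ℝ)
    (g : Fin N → Fin d → ℝ) : Prop where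
  cube_le : ∀ x ∈ S, |∑ i, v i ^ 3 * (g i ⬝ᵥ x)| ≤ t
  dev_mul_le : ∀ x ∈ S, |∑ i, v i * (truncDev d s τ (g i) * (g i ⬝ᵥ x))| ≤ t
  sq_le : ∀ x ∈ polarizationPoints S,
    |∑ i, v i ^ 2 * ((g i ⬝ᵥ x) ^ 2 - s * ∑ k, x k ^ 2)| ≤ t
  dev_mul_sq_le : ∀ x ∈ polarizationPoints S,
    |∑ i, (truncDev d s τ (g i) * (g i ⬝ᵥ x) ^ 2 -
      ∫ y, truncDev d s τ y * (y ⬝ᵥ x) ^ 2 ∂(gaussVec d s))| ≤ t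

lemma crossVec_dotProduct {s : ℝ} (hg : ∀ i, |dev d s (g i)| ≤ τ) (x : Fin d → ℝ) :
    crossVec s v g ⬝ᵥ x = ∑ i, v i ^ 3 * (g i ⬝ᵥ x) +
      ∑ i, v i * (truncDev d s τ (g i) * (g i ⬝ᵥ x)) := by
  rw [crossVec, sum_dotProduct, ← Finset.sum_add_distrib]
  refine Finset.sum_congr rfl fun i _ => ?_
  rw [smul_dotProduct, smul_eq_mul, weight, truncDev, if_pos (hg i)]
  ring

lemma isSymm_restMat (s : ℝ) (v : Fin N → ℝ) (g : Fin N → Fin d → ℝ) :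
    (restMat s v g).IsSymm := by
  simp only [IsSymm, restMat, transpose_sub, transpose_sum, transpose_smul, transpose_vecMulVec,
    transpose_one]

lemma dotProduct_restMat_mulVec {s : ℝ} (hg : ∀ i, |dev d s (g i)| ≤ τ) (x : Fin d → ℝ) :
    x ⬝ᵥ restMat s v g *ᵥ x =
      ∑ i, (v i ^ 2 * (g i ⬝ᵥ x) ^ 2 + truncDev d s τ (g i) * (g i ⬝ᵥ x) ^ 2) -
        3 * s * ∑ k, x k ^ 2 := by
  rw [restMat, sub_mulVec, dotProduct_sub, sum_mulVec, dotProduct_sum, smul_mulVec, one_mulVec,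
    dotProduct_smul, smul_eq_mul, ← sum_sq_eq_dotProduct]
  congr 1
  refine Finset.sum_congr rfl fun i _ => ?_
  rw [smul_mulVec, vecMulVec_mulVec, op_smul_eq_smul, dotProduct_smul, dotProduct_smul,
    smul_eq_mul, smul_eq_mul, weight, truncDev, if_pos (hg i), dotProduct_comm x]
  ring

lemma dotProduct_restMat_mulVec_eq_add {s : ℝ} (hg : ∀ i, |dev d s (g i)| ≤ τ)
    (hNs : N * s = 1) (x : Fin d → ℝ) (E : ℝ) :
    x ⬝ᵥ restMat s v g *ᵥ x =
      ∑ i, v i ^ 2 * ((g i ⬝ᵥ x) ^ 2 - s * ∑ k, x k ^ 2) +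
      ∑ i, (truncDev d s τ (g i) * (g i ⬝ᵥ x) ^ 2 - E) +
      N * (E - 2 * s ^ 2 * ∑ k, x k ^ 2) +
      (∑ i, v i ^ 2 - 1) * s * ∑ k, x k ^ 2 := by
  rw [dotProduct_restMat_mulVec hg, Finset.sum_add_distrib]
  simp only [mul_sub, Finset.sum_sub_distrib, ← Finset.sum_mul, Finset.sum_const,
    Finset.card_univ, Fintype.card_fin, nsmul_eq_mul]
  linear_combination (2 * s * ∑ k, x k ^ 2) * hNs

lemma abs_mul_integral_truncDev_mul_sub_le (hs : 0 < s) (hNs : (N : ℝ) * s = 1) (hd : d ≤ n)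
    (hτ : (gaussVec d s).real {g | τ < |dev d s g|} ≤ s) (hx : ∑ k, x k ^ 2 ≤ 1) :
    |N * (∫ y, truncDev d s τ y * (y ⬝ᵥ x) ^ 2 ∂(gaussVec d s) -
      2 * (s : ℝ) ^ 2 * ∑ k, x k ^ 2)| ≤ 2 ^ 12 * (√(n : ℝ) * s * √(s : ℝ)) := by
  rw [abs_mul, Nat.abs_cast]
  calc (N : ℝ) * _ ≤ N * (2 ^ 12 * (√(d : ℝ) * (s : ℝ) ^ 2 *
        √((gaussVec d s).real {g | τ < |dev d s g|}))) := by
        gcongr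
        exact abs_integral_truncDev_mul_sub_le hs hx τ
    _ ≤ N * (2 ^ 12 * (√(n : ℝ) * (s : ℝ) ^ 2 * √(s : ℝ))) := by gcongr
    _ = 2 ^ 12 * (√(n : ℝ) * s * √(s : ℝ)) := by
        linear_combination (2 ^ 12 * √(n : ℝ) * s * √(s : ℝ)) * hNs

namespace TestBounds

lemma eucNorm_crossVec_le (T : TestBounds S s v τ t g) (hS : IsHalfNet S)
    (hg : ∀ i, |dev d s (g i)| ≤ τ) : eucNorm (crossVec s v g) ≤ 4 * t := by
  have := hS.eucNorm_le_two_mul (b := crossVec s v g) (t := 2 * t) fun x hx => by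
    rw [crossVec_dotProduct hg]
    exact (abs_add_le _ _).trans (by linarith [T.cube_le x hx, T.dev_mul_le x hx])
  linarith

lemma eucNorm_restMat_mulVec_le (T : TestBounds S s v τ t g) (hS : IsHalfNet S)
    (hs : 0 < s) (hNs : (N : ℝ) * s = 1) (hd : d ≤ n)
    (hτ : (gaussVec d s).real {g | τ < |dev d s g|} ≤ s)
    (hg : ∀ i, |dev d s (g i)| ≤ τ) (z : Fin d → ℝ) :
    eucNorm (restMat s v g *ᵥ z) ≤
      8 * (2 * t + 2 ^ 12 * (√(n : ℝ) * s * √(s : ℝ)) + |∑ i, v i ^ 2 - 1| * s) *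
        eucNorm z := by
  refine hS.eucNorm_mulVec_le (isSymm_restMat _ v g) (fun x hx => ?_) z
  have hx1 : ∑ k, x k ^ 2 ≤ 1 :=
    eucNorm_le_one_iff.1 (hS.eucNorm_le_one_of_mem_polarizationPoints hx)
  have norm_defect : |(∑ i, v i ^ 2 - 1) * s * ∑ k, x k ^ 2| ≤ |∑ i, v i ^ 2 - 1| * s := by
    rw [abs_mul, abs_mul, abs_of_nonneg s.coe_nonneg,
      abs_of_nonneg (Finset.sum_nonneg fun k _ => sq_nonneg (x k))]
    exact mul_le_of_le_one_right (by positivity) hx1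
  rw [dotProduct_restMat_mulVec_eq_add hg hNs x
    (∫ y, truncDev d s τ y * (y ⬝ᵥ x) ^ 2 ∂(gaussVec d s))]
  refine (abs_add_le _ _).trans (add_le_add ((abs_add_le _ _).trans (add_le_add
    ((abs_add_le _ _).trans ?_) (abs_mul_integral_truncDev_mul_sub_le hs hNs hd hτ hx1)))
    norm_defect)
  linarith [T.sq_le x hx, T.dev_mul_sq_le x hx]

end TestBounds

lemma pow_mul_exp_neg_le (hd : d ≤ n) :
    25 ^ d * Real.exp (-(4 * (n + L))) ≤ Real.exp (-(4 * L)) := by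
  have base : (25 : ℝ) ≤ Real.exp 4 := calc
    (25 : ℝ) ≤ 2.7 ^ 4 := by norm_num
    _ ≤ Real.exp 1 ^ 4 := by gcongr; linarith [Real.exp_one_gt_d9]
    _ = Real.exp 4 := by rw [← Real.exp_nat_mul]; norm_num
  calc (25 : ℝ) ^ d * Real.exp (-(4 * (n + L)))
      ≤ Real.exp 4 ^ n * Real.exp (-(4 * (n + L))) := by
        gcongr
        exact (pow_le_pow_left₀ (by norm_num) base d).trans
          (pow_le_pow_right₀ (Real.one_le_exp (by norm_num)) hd)
    _ = Real.exp (-(4 * L)) := by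
        rw [← Real.exp_nat_mul, ← Real.exp_add]
        congr 1
        ring

section UnionBound

variable {α ι : Type*} [MeasurableSpace α] {μ : Measure α}

lemma measure_not_and_le {P Q : α → Prop} {p q : ℝ} (hp0 : 0 ≤ p) (hq0 : 0 ≤ q)
    (hp : μ {a | ¬ P a} ≤ ENNReal.ofReal p) (hq : μ {a | ¬ Q a} ≤ ENNReal.ofReal q) :
    μ {a | ¬ (P a ∧ Q a)} ≤ ENNReal.ofReal (p + q) := by
  have cover : {a | ¬ (P a ∧ Q a)} ⊆ {a | ¬ P a} ∪ {a | ¬ Q a} := fun a ha => not_and_or.1 ha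
  rw [ENNReal.ofReal_add hp0 hq0]
  exact (measure_mono cover).trans ((measure_union_le _ _).trans (add_le_add hp hq))

lemma measure_not_forall_mem_le (S : Finset ι) {P : ι → α → Prop} {p q : ℝ}
    (h : ∀ x ∈ S, μ {a | ¬ P x a} ≤ ENNReal.ofReal p) (hq : S.card * p ≤ q) :
    μ {a | ¬ ∀ x ∈ S, P x a} ≤ ENNReal.ofReal q := by
  have cover : {a | ¬ ∀ x ∈ S, P x a} ⊆ ⋃ x ∈ S, {a | ¬ P x a} := fun a ha => by
    obtain ⟨x, hx, not_P⟩ : ∃ x ∈ S, ¬ P x a := by simpa using ha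
    exact Set.mem_biUnion hx not_P
  refine (measure_mono cover).trans ((measure_biUnion_finset_le S _).trans ?_)
  calc ∑ x ∈ S, μ {a | ¬ P x a} ≤ ∑ _ ∈ S, ENNReal.ofReal p := Finset.sum_le_sum h
    _ = ENNReal.ofReal (S.card * p) := by
      rw [Finset.sum_const, nsmul_eq_mul, ENNReal.ofReal_mul (by positivity),
        ENNReal.ofReal_natCast]
    _ ≤ ENNReal.ofReal q := ENNReal.ofReal_le_ofReal hq

lemma measure_not_le_le_measure_le (f : α → ℝ) (t : ℝ) :
    μ {a | ¬ f a ≤ t} ≤ μ {a | t ≤ f a} :=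
  measure_mono fun _ ha => (not_le.1 ha).le

end UnionBound

lemma iidGaussVec_preimage_eval (i : Fin N) {A : Set (Fin d → ℝ)} (hA : MeasurableSet A) :
    iidGaussVec N d s {g | g i ∈ A} = gaussVec d s A :=
  (measurePreserving_eval (fun _ : Fin N => gaussVec d s) i).measure_preimage hA.nullMeasurableSet

namespace Scales

lemma measureReal_dev_gt_le (H : Scales N n s v L τ t) (hd : d ≤ n)
    (hq : 2 * Real.exp (-(4 * L)) ≤ s) : (gaussVec d s).real {g | τ < |dev d s g|} ≤ s := by
  have weak : gaussVec d s {g | τ < |dev d s g|} ≤ gaussVec d s {g | τ ≤ |dev d s g|} :=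
    measure_mono fun g hg => (show τ < |dev d s g| from hg).le
  exact ENNReal.toReal_le_of_le_ofReal s.coe_nonneg
    ((weak.trans (H.measure_dev hd)).trans (ENNReal.ofReal_le_ofReal hq))

lemma measure_not_abs_dev_le (H : Scales N n s v L τ t) (hd : d ≤ n) :
    iidGaussVec N d s {g | ¬ ∀ i ∈ Finset.univ, |dev d s (g i)| ≤ τ} ≤
      ENNReal.ofReal (N * (2 * Real.exp (-(4 * L)))) := by
  refine measure_not_forall_mem_le _ (p := 2 * Real.exp (-(4 * L))) (fun i _ => ?_) (by simp)
  refine (measure_not_le_le_measure_le _ τ).trans (Eq.trans_le ?_ (H.measure_dev hd))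
  exact iidGaussVec_preimage_eval (A := {g | τ ≤ |dev d s g|}) i
    (measurableSet_le measurable_const (by fun_prop))

lemma measure_not_loo_le (H : Scales N n s v L τ t) :
    iidGaussVec N d s {g | ¬ ∀ p ∈ Finset.univ ×ˢ Finset.range N,
      |g p.1 ⬝ᵥ looMat s v g p.1 ^ p.2 *ᵥ looVec s v g p.1| ≤
        4 * √(L * s) * eucNorm (looMat s v g p.1 ^ p.2 *ᵥ looVec s v g p.1)} ≤
      ENNReal.ofReal (N ^ 2 * (2 * Real.exp (-(4 * L)))) := by
  refine measure_not_forall_mem_le _ (p := 2 * Real.exp (-(4 * L))) (fun p _ => ?_)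
    (by simp [sq])
  simp only [not_le]
  exact measure_loo_dotProduct_gt_le H.s_pos (zero_lt_one.trans_le H.one_le_L) p.1 p.2

lemma measure_not_testBounds_le (H : Scales N n s v L τ t) (hd : d ≤ n) (hS : IsHalfNet S)
    (card_le : S.card ≤ 5 ^ d) :
    iidGaussVec N d s {g | ¬ TestBounds S s v τ t g} ≤
      ENNReal.ofReal (6 * (2 * Real.exp (-(4 * L)))) := by
  have budget := pow_mul_exp_neg_le (L := L) hd
  have sq_pow : ((5 : ℝ) ^ d) ^ 2 = 25 ^ d := by rw [← pow_mul, mul_comm, pow_mul]; norm_num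
  have net_budget : S.card * (2 * Real.exp (-(4 * (n + L)))) ≤ 2 * Real.exp (-(4 * L)) := by
    have : (S.card : ℝ) ≤ 25 ^ d := calc
      (S.card : ℝ) ≤ 5 ^ d := by exact_mod_cast card_le
      _ ≤ 25 ^ d := by gcongr; norm_num
    linarith [mul_le_mul_of_nonneg_right this (Real.exp_nonneg (-(4 * (n + L))))]
  have points_budget : (polarizationPoints S).card * (2 * Real.exp (-(4 * (n + L)))) ≤
      2 * (2 * Real.exp (-(4 * L))) := by
    have : ((polarizationPoints S).card : ℝ) ≤ 2 * 25 ^ d := calc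
      ((polarizationPoints S).card : ℝ) ≤ 2 * (S.card : ℝ) ^ 2 := by
        exact_mod_cast card_polarizationPoints_le S
      _ ≤ 2 * (5 ^ d) ^ 2 := by gcongr; exact_mod_cast card_le
      _ = 2 * 25 ^ d := by rw [sq_pow]
    linarith [mul_le_mul_of_nonneg_right this (Real.exp_nonneg (-(4 * (n + L))))]
  have net_le (x) (hx : x ∈ S) : ∑ k, x k ^ 2 ≤ 1 := eucNorm_le_one_iff.1 (hS.eucNorm_le_one x hx)
  have points_le (x) (hx : x ∈ polarizationPoints S) : ∑ k, x k ^ 2 ≤ 1 :=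
    eucNorm_le_one_iff.1 (hS.eucNorm_le_one_of_mem_polarizationPoints hx)
  have q_nonneg : 0 ≤ 2 * Real.exp (-(4 * L)) := by positivity
  have union := measure_not_and_le (by positivity) (by positivity)
    (measure_not_forall_mem_le S (fun x hx => (measure_not_le_le_measure_le _ t).trans
      (H.measure_sum_cube_mul_dotProduct (net_le x hx))) net_budget) <|
    measure_not_and_le q_nonneg (by positivity)
    (measure_not_forall_mem_le S (fun x hx => (measure_not_le_le_measure_le _ t).trans
      (H.measure_sum_mul_truncDev_mul_dotProduct hd (net_le x hx))) net_budget) <|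
    measure_not_and_le (by positivity) (by positivity)
    (measure_not_forall_mem_le _ (fun x hx => (measure_not_le_le_measure_le _ t).trans
      (H.measure_sum_sq_mul_dotProduct_sq_sub (points_le x hx))) points_budget) <|
    measure_not_forall_mem_le _ (fun x hx => (measure_not_le_le_measure_le _ t).trans
      (H.measure_sum_truncDev_mul_dotProduct_sq_sub hd (points_le x hx))) points_budget
  refine (measure_mono fun g hg => ?_).trans (union.trans_eq ?_)
  · exact mt (fun h => ⟨h.1, h.2.1, h.2.2.1, h.2.2.2⟩) hg
  · congr 1
    ring

lemma measure_not_goodRows_le (H : Scales N n s v L τ t) (hNs : (N : ℝ) * s = 1)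
    (hd : d ≤ n) (hq : 2 * Real.exp (-(4 * L)) ≤ s) :
    iidGaussVec N d s {g | ¬ GoodRows n s v L τ t g} ≤
      ENNReal.ofReal ((N + N ^ 2 + 7) * (2 * Real.exp (-(4 * L)))) := by
  obtain ⟨S, hS, card_le⟩ := exists_isHalfNet d
  have union := measure_not_and_le (by positivity) (by positivity) (H.measure_not_abs_dev_le hd) <|
    measure_not_and_le (by positivity) (by positivity)
      ((measure_not_le_le_measure_le _ t).trans (H.measure_sum_sq_mul_dev hd)) <|
    measure_not_and_le (by positivity) (by positivity)
      (H.measure_not_testBounds_le hd hS card_le) H.measure_not_loo_le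
  refine (measure_mono fun g hg => ?_).trans (union.trans_eq ?_)
  · refine mt (fun h => ?_) hg
    obtain ⟨dev_le, diag_le, tests, loo_le⟩ := h
    have dev_le (i) : |dev d s (g i)| ≤ τ := dev_le i (Finset.mem_univ i)
    exact ⟨dev_le, diag_le, tests.eucNorm_crossVec_le hS dev_le,
      tests.eucNorm_restMat_mulVec_le hS H.s_pos hNs hd (H.measureReal_dev_gt_le hd hq) dev_le,
      fun j k hk => loo_le (j, k) (by simpa using hk)⟩
  · congr 1
    ring

end Scales

end GoodRows

/-! ### Consequences of the definition of `η` -/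

section EtaBounds

variable {N n d : ℕ} {s : NNReal} {v : Fin N → ℝ} {L η : ℝ} {g : Fin N → Fin d → ℝ}

/-- The lower bounds on `η` coming from its individual summands, squared where that removes the
square roots, with `s = 1/N` and `L = log (N/δ)`; `cube_le_one` is the assumption relating `N`
to `log (N/δ)`. -/
structure EtaBounds (n : ℕ) (s : NNReal) (v : Fin N → ℝ) (L η : ℝ) : Prop where
  s_pos : 0 < s
  one_le_n : 1 ≤ n
  one_le_L : 1 ≤ L
  cube_le_one : L ^ 3 * s ≤ 1
  one_le : n ^ 2 * L * (s : ℝ) ^ 3 ≤ η ^ 2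
  two_le : n ^ 2 * L * (∑ i, v i ^ 2) * (s : ℝ) ^ 3 ≤ η ^ 2
  four_le : n * L * (∑ i, v i ^ 4) * (s : ℝ) ^ 2 ≤ η ^ 2
  six_le : (n + L) * (∑ i, v i ^ 6) * s ≤ η ^ 2
  sup_le : ∀ i, v i ^ 2 * (n * L + L ^ 2) * s ≤ η
  cube_le : (n * L) ^ 3 * (s : ℝ) ^ 4 ≤ η ^ 2
  norm_defect_le : |∑ i, v i ^ 2 - 1| * s ≤ η

/-- The truncation level for the deviations of the squared norms of the rows. -/
noncomputable def truncLevel (n : ℕ) (L s : ℝ) : ℝ := 64 * (√(n * L) + L) * s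

lemma truncLevel_nonneg {s : ℝ} (hL : 0 ≤ L) (hs : 0 ≤ s) : 0 ≤ truncLevel n L s := by
  unfold truncLevel
  positivity

lemma truncLevel_sq_le {s : ℝ} (hL : 0 ≤ L) :
    truncLevel n L s ^ 2 ≤ 2 ^ 13 * (n * L + L ^ 2) * s ^ 2 := by
  calc truncLevel n L s ^ 2 = 2 ^ 12 * (√(n * L) + L) ^ 2 * s ^ 2 := by unfold truncLevel; ring
    _ ≤ 2 ^ 12 * (2 * (√(n * L) ^ 2 + L ^ 2)) * s ^ 2 := by gcongr; exact add_sq_le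
    _ = 2 ^ 13 * (n * L + L ^ 2) * s ^ 2 := by rw [Real.sq_sqrt (by positivity)]; ring

lemma truncLevel_le_of_log_le {s : ℝ} (hL : 0 ≤ L) (hs : 0 ≤ s) (h : L ≤ n) :
    truncLevel n L s ≤ 128 * √(n * L) * s := by
  have : L ≤ √(n * L) := Real.le_sqrt_of_sq_le (by rw [sq]; gcongr)
  unfold truncLevel
  gcongr ?_ * _
  linarith

lemma truncLevel_le_of_le_log {s : ℝ} (hL : 0 ≤ L) (hs : 0 ≤ s) (h : n ≤ L) :
    truncLevel n L s ≤ 128 * L * s := by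
  have : √(n * L) ≤ L := Real.sqrt_le_iff.2 ⟨hL, by rw [sq]; gcongr⟩
  unfold truncLevel
  gcongr ?_ * _
  linarith

namespace EtaBounds

lemma one_le_n_cast (H : EtaBounds n s v L η) : (1 : ℝ) ≤ n := by exact_mod_cast H.one_le_n

lemma s_pos_cast (H : EtaBounds n s v L η) : (0 : ℝ) < s := by exact_mod_cast H.s_pos

lemma eta_pos (H : EtaBounds n s v L η) : 0 < η := by
  have hn := H.one_le_n_cast
  have hL := H.one_le_L
  have hs := H.s_pos_cast
  have nonneg : 0 ≤ η := H.norm_defect_le.trans' (by positivity)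
  have sq_pos : 0 < η ^ 2 := H.one_le.trans_lt' (by positivity)
  exact nonneg.lt_of_ne' (pow_ne_zero_iff two_ne_zero |>.1 sq_pos.ne')

lemma add_le (H : EtaBounds n s v L η) : n + L ≤ 2 * (n * L) :=
  add_le_two_mul_mul H.one_le_n_cast H.one_le_L

lemma log_sq_mul_le (H : EtaBounds n s v L η) : L ^ 2 * (s : ℝ) ^ 2 ≤ η := by
  have hL := H.one_le_L
  have hs := H.s_pos_cast
  refine le_of_sq_le_sq ?_ H.eta_pos.le
  calc (L ^ 2 * (s : ℝ) ^ 2) ^ 2 = (L ^ 3 * s) * (1 * L * (s : ℝ) ^ 3) := by ring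
    _ ≤ 1 * (n ^ 2 * L * (s : ℝ) ^ 3) := by
      gcongr
      · exact H.cube_le_one
      · exact one_le_pow₀ H.one_le_n_cast
    _ ≤ η ^ 2 := by linarith [H.one_le]

lemma sqrt_cube_mul_le (H : EtaBounds n s v L η) : √(n * L) ^ 3 * (s : ℝ) ^ 2 ≤ η := by
  have hL := H.one_le_L
  refine le_of_sq_le_sq (le_of_eq_of_le ?_ H.cube_le) H.eta_pos.le
  rw [mul_pow, ← pow_mul, mul_comm 3 2, pow_mul, Real.sq_sqrt (by positivity)]
  ring

lemma one_le_sqrt (H : EtaBounds n s v L η) : 1 ≤ √(n * L) :=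
  Real.one_le_sqrt.2 (one_le_mul_of_one_le_of_one_le H.one_le_n_cast H.one_le_L)

lemma two_le_of_log_le (H : EtaBounds n s v L η) (h : L ≤ n) :
    64 * (n + L) * (∑ i, v i ^ 2) * truncLevel n L s ^ 2 * s ≤ (2 ^ 16 * η) ^ 2 := by
  have hL := H.one_le_L
  have trunc_nonneg := truncLevel_nonneg (n := n) (zero_le_one.trans hL) s.coe_nonneg
  calc 64 * (n + L) * (∑ i, v i ^ 2) * truncLevel n L s ^ 2 * s
      ≤ 64 * (n + n) * (∑ i, v i ^ 2) * (128 * √(n * L) * s) ^ 2 * s := by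
        gcongr
        exact truncLevel_le_of_log_le (zero_le_one.trans hL) s.coe_nonneg h
    _ = 2 ^ 21 * (n ^ 2 * L * (∑ i, v i ^ 2) * (s : ℝ) ^ 3) := by
        rw [mul_pow, mul_pow, Real.sq_sqrt (by positivity)]
        ring
    _ ≤ (2 ^ 16 * η) ^ 2 := by linarith [H.two_le, sq_nonneg η]

lemma two_le_bernstein (H : EtaBounds n s v L η) :
    2 ^ 28 * (n + L) * n * (∑ i, v i ^ 2) * (s : ℝ) ^ 3 ≤ (2 ^ 16 * η) ^ 2 := calc
  2 ^ 28 * (n + L) * n * (∑ i, v i ^ 2) * (s : ℝ) ^ 3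
      ≤ 2 ^ 28 * (2 * (n * L)) * n * (∑ i, v i ^ 2) * (s : ℝ) ^ 3 := by gcongr; exact H.add_le
  _ = 2 ^ 29 * (n ^ 2 * L * (∑ i, v i ^ 2) * (s : ℝ) ^ 3) := by ring
  _ ≤ (2 ^ 16 * η) ^ 2 := by linarith [H.two_le, sq_nonneg η]

lemma abs_mul_truncLevel_le_of_le_log (H : EtaBounds n s v L η) (h : n ≤ L) (i : Fin N) :
    64 * (n + L) * |v i| * truncLevel n L s * √(s : ℝ) ≤ 2 ^ 16 * η := by
  have hL := H.one_le_L
  have trunc_nonneg := truncLevel_nonneg (n := n) (zero_le_one.trans hL) s.coe_nonneg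
  have sup_le : L ^ 2 * s * v i ^ 2 ≤ η := by
    have : 0 ≤ v i ^ 2 * (n * L) * s := by positivity
    linarith [H.sup_le i]
  have amgm : |v i| * √(s : ℝ) ≤ (v i ^ 2 + s) / 2 := by
    have := two_mul_le_add_sq |v i| √(s : ℝ)
    rw [sq_abs, Real.sq_sqrt s.coe_nonneg] at this
    linarith
  calc 64 * (n + L) * |v i| * truncLevel n L s * √(s : ℝ)
      ≤ 64 * (L + L) * |v i| * (128 * L * s) * √(s : ℝ) := by
        gcongr
        exact truncLevel_le_of_le_log (zero_le_one.trans hL) s.coe_nonneg h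
    _ = 2 ^ 14 * (L ^ 2 * s) * (|v i| * √(s : ℝ)) := by ring
    _ ≤ 2 ^ 14 * (L ^ 2 * s) * ((v i ^ 2 + s) / 2) := by gcongr
    _ ≤ 2 ^ 16 * η := by linarith [H.log_sq_mul_le, H.eta_pos]

lemma add_mul_truncLevel_mul_le (H : EtaBounds n s v L η) :
    128 * (n + L) * truncLevel n L s * s ≤ 2 ^ 16 * η := by
  have hL := H.one_le_L
  have hn := H.one_le_n_cast
  have sq_sqrt : √(n * L) ^ 2 = n * L := Real.sq_sqrt (by positivity)
  have hr := H.one_le_sqrt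
  have cube_dominates : (n + L) * (√(n * L) + L) ≤ 3 * √(n * L) ^ 3 + L ^ 2 := by
    have h1 : n * √(n * L) ≤ n * √(n * L) * L := le_mul_of_one_le_right (by positivity) hL
    have h2 : L * √(n * L) ≤ L * √(n * L) * n := le_mul_of_one_le_right (by positivity) hn
    have h3 : √(n * L) ^ 2 ≤ √(n * L) ^ 3 := pow_le_pow_right₀ hr (by norm_num)
    have h4 : √(n * L) ^ 3 = n * √(n * L) * L := by rw [pow_succ, sq_sqrt]; ring
    linarith
  calc 128 * (n + L) * truncLevel n L s * s
      = 2 ^ 13 * ((n + L) * (√(n * L) + L)) * (s : ℝ) ^ 2 := by unfold truncLevel; ring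
    _ ≤ 2 ^ 13 * (3 * √(n * L) ^ 3 + L ^ 2) * (s : ℝ) ^ 2 := by gcongr
    _ ≤ 2 ^ 16 * η := by linarith [H.sqrt_cube_mul_le, H.log_sq_mul_le, H.eta_pos]

lemma scales (H : EtaBounds n s v L η) (hNs : (N : ℝ) * s = 1) :
    Scales N n s v L (truncLevel n L s) (2 ^ 16 * η) := by
  have hL := H.one_le_L
  have hs := H.s_pos_cast
  have hη := H.eta_pos
  have sq_nonneg_eta := sq_nonneg η
  have sqrt_pos := zero_lt_one.trans_le H.one_le_sqrt
  refine ⟨H.s_pos, H.one_le_n, hL, by positivity, ?_, ?_, ?_, fun i => ?_, ?_, ?_, ?_, ?_,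
    H.add_mul_truncLevel_mul_le⟩
  · unfold truncLevel
    positivity
  · calc 4096 * n * L * (s : ℝ) ^ 2 = (64 * √(n * L) * s) ^ 2 := by
          rw [mul_pow, mul_pow, Real.sq_sqrt (by positivity)]
          ring
      _ ≤ truncLevel n L s ^ 2 := by
          unfold truncLevel
          gcongr
          linarith
  · unfold truncLevel
    gcongr
    linarith
  · calc 64 * (n + L) * v i ^ 2 * s ≤ 64 * (2 * (n * L)) * v i ^ 2 * s := by
          gcongr
          exact H.add_le
      _ ≤ 128 * (v i ^ 2 * (n * L + L ^ 2) * s) := by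
          have : 0 ≤ v i ^ 2 * L ^ 2 * s := by positivity
          linarith
      _ ≤ 2 ^ 16 * η := by linarith [H.sup_le i]
  · linarith [H.four_le]
  · linarith [H.six_le]
  · exact (le_total L n).imp H.two_le_of_log_le
      fun h => ⟨H.two_le_bernstein, H.abs_mul_truncLevel_le_of_le_log h⟩
  · calc 2 ^ 28 * (n + L) * n * N * (s : ℝ) ^ 4 = 2 ^ 28 * (n + L) * n * (s : ℝ) ^ 3 := by
          linear_combination (2 ^ 28 * (n + L) * n * (s : ℝ) ^ 3) * hNs
      _ ≤ 2 ^ 28 * (2 * (n * L)) * n * (s : ℝ) ^ 3 := by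
          gcongr
          exact H.add_le
      _ ≤ (2 ^ 16 * η) ^ 2 := by linarith [H.one_le]

lemma truncLevel_sq_le_mul_eta (H : EtaBounds n s v L η) :
    truncLevel n L s ^ 2 ≤ 2 ^ 14 * η := by
  have hL := H.one_le_L
  have nL_mul_le : n * L * (s : ℝ) ^ 2 ≤ √(n * L) ^ 3 * (s : ℝ) ^ 2 := by
    gcongr
    calc n * L = √(n * L) ^ 2 := (Real.sq_sqrt (by positivity)).symm
      _ ≤ √(n * L) ^ 3 := pow_le_pow_right₀ H.one_le_sqrt (by norm_num)
  have := truncLevel_sq_le (n := n) (L := L) (s := s) (by positivity)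
  linarith [H.sqrt_cube_mul_le, H.log_sq_mul_le]

lemma sq_mul_add_le (H : EtaBounds n s v L η) (i : Fin N) :
    v i ^ 2 * (n * s + truncLevel n L s) ≤ 2 ^ 8 * η := by
  have hL := H.one_le_L
  have hr := H.one_le_sqrt
  have n_le : (n : ℝ) ≤ n * L := le_mul_of_one_le_right (by positivity) hL
  have log_le : L ≤ n * L := le_mul_of_one_le_left (by positivity) H.one_le_n_cast
  have sqrt_le : √(n * L) ≤ n * L := calc
    √(n * L) ≤ √(n * L) ^ 2 := le_self_pow₀ hr two_ne_zero
    _ = n * L := Real.sq_sqrt (by positivity)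
  calc v i ^ 2 * (n * s + truncLevel n L s)
      ≤ v i ^ 2 * (n * L * s + 64 * (n * L + n * L) * s) := by unfold truncLevel; gcongr
    _ ≤ 2 ^ 8 * (v i ^ 2 * (n * L + L ^ 2) * s) := by
      have : 0 ≤ v i ^ 2 * (n * L) * s := by positivity
      have : 0 ≤ v i ^ 2 * L ^ 2 * s := by positivity
      linarith
    _ ≤ 2 ^ 8 * η := by linarith [H.sup_le i]

lemma sq_add_mul_le (H : EtaBounds n s v L η) (i : Fin N) :
    (v i ^ 2 + truncLevel n L s) * (n * s + truncLevel n L s) ≤ 2 ^ 15 * η := by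
  have hL := H.one_le_L
  have trunc_nonneg := truncLevel_nonneg (n := n) (zero_le_one.trans hL) s.coe_nonneg
  have : 0 ≤ L * truncLevel n L s * s := by positivity
  linarith [H.sq_mul_add_le i, H.truncLevel_sq_le_mul_eta, H.add_mul_truncLevel_mul_le, H.eta_pos]

end EtaBounds

lemma sum_weight_mul_sq_sub (g : Fin N → Fin d → ℝ) :
    |∑ i, weight s (v i) (g i) * v i ^ 2 - 3 * s - (∑ i, v i ^ 4 - 3 * s)| =
      |∑ i, v i ^ 2 * dev d s (g i)| := by
  rw [sub_sub_sub_cancel_right, ← Finset.sum_sub_distrib]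
  congr 1
  exact Finset.sum_congr rfl fun i _ => by rw [weight]; ring

namespace GoodRows

variable {t τ : ℝ}

lemma abs_weight_le (hg : GoodRows n s v L τ t g) (j : Fin N) :
    |weight s (v j) (g j)| ≤ v j ^ 2 + τ := by
  refine (abs_add_le _ _).trans ?_
  rw [abs_of_nonneg (sq_nonneg (v j))]
  linarith [hg.abs_dev_le j]

lemma eucNorm_row_sq_le (hg : GoodRows n s v L τ t g) (hd : d ≤ n) (j : Fin N) :
    eucNorm (g j) ^ 2 ≤ n * s + τ := by
  have dev_le := (le_abs_self _).trans (hg.abs_dev_le j)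
  have : (d : ℝ) * s ≤ n * s := by gcongr
  rw [dev, ← eucNorm_sq] at dev_le
  linarith

lemma eucNorm_row_sq_le_add (hg : GoodRows n s v L (truncLevel n L s) t g) (hd : d ≤ n)
    (hL : 0 ≤ L) (j : Fin N) : eucNorm (g j) ^ 2 ≤ 100 * (n + L) * s := by
  have amgm : √(n * L) ≤ (n + L) / 2 := by
    rw [Real.sqrt_le_left (by positivity)]
    linarith [sq_nonneg (n - L)]
  calc eucNorm (g j) ^ 2 ≤ n * s + truncLevel n L s := hg.eucNorm_row_sq_le hd j
    _ ≤ n * s + 64 * ((n + L) / 2 + L) * s := by unfold truncLevel; gcongr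
    _ ≤ 100 * (n + L) * s := by
      have : 0 ≤ n * (s : ℝ) := by positivity
      have : 0 ≤ L * s := by positivity
      linarith

lemma eucNorm_restMat_mulVec_le_eta (H : EtaBounds n s v L η)
    (hg : GoodRows n s v L (truncLevel n L s) (2 ^ 16 * η) g) (z : Fin d → ℝ) :
    eucNorm (restMat s v g *ᵥ z) ≤ 2 ^ 28 * η * eucNorm z := by
  have hη := H.eta_pos
  have bias_le : √(n : ℝ) * s * √(s : ℝ) ≤ η := by
    refine le_of_sq_le_sq ?_ hη.le
    calc (√(n : ℝ) * s * √(s : ℝ)) ^ 2 = n * (s : ℝ) ^ 3 := by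
          rw [mul_pow, mul_pow, Real.sq_sqrt n.cast_nonneg, Real.sq_sqrt s.coe_nonneg]
          ring
      _ ≤ n ^ 2 * L * (s : ℝ) ^ 3 := by
          gcongr
          calc (n : ℝ) ≤ n ^ 2 := le_self_pow₀ H.one_le_n_cast two_ne_zero
            _ ≤ n ^ 2 * L := le_mul_of_one_le_right (by positivity) H.one_le_L
      _ ≤ η ^ 2 := H.one_le
  refine (hg.rest_le z).trans (mul_le_mul_of_nonneg_right ?_ (eucNorm_nonneg z))
  linarith [H.norm_defect_le]

lemma abs_cube_mul_eucNorm_le (H : EtaBounds n s v L η)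
    (hg : GoodRows n s v L (truncLevel n L s) (2 ^ 16 * η) g) (hd : d ≤ n) (j : Fin N) :
    |v j| ^ 3 * eucNorm (g j) ≤ 10 * η := by
  have hL := H.one_le_L
  have pow_six : (|v j| ^ 3) ^ 2 = v j ^ 6 := by
    rw [← pow_mul]
    exact Even.pow_abs (by decide) _
  refine le_of_sq_le_sq ?_ (by linarith [H.eta_pos])
  calc (|v j| ^ 3 * eucNorm (g j)) ^ 2 = v j ^ 6 * eucNorm (g j) ^ 2 := by rw [mul_pow, pow_six]
    _ ≤ (∑ i, v i ^ 6) * (100 * (n + L) * s) := by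
      gcongr
      · exact Finset.single_le_sum (f := fun i => v i ^ 6) (fun i _ => by positivity)
          (Finset.mem_univ j)
      · exact hg.eucNorm_row_sq_le_add hd (zero_le_one.trans hL) j
    _ ≤ (10 * η) ^ 2 := by linarith [H.six_le]

lemma abs_weight_mul_mul_eucNorm_le (H : EtaBounds n s v L η)
    (hg : GoodRows n s v L (truncLevel n L s) (2 ^ 16 * η) g) (hd : d ≤ n) (j : Fin N) :
    |weight s (v j) (g j) * v j| * eucNorm (g j) ≤ 2 ^ 28 * η := by
  have amgm := two_mul_le_add_sq (truncLevel n L s) (|v j| * eucNorm (g j))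
  have mixed : v j ^ 2 * eucNorm (g j) ^ 2 ≤ v j ^ 2 * (n * s + truncLevel n L s) := by
    gcongr
    exact hg.eucNorm_row_sq_le hd j
  rw [mul_pow, sq_abs] at amgm
  calc |weight s (v j) (g j) * v j| * eucNorm (g j)
      = |weight s (v j) (g j)| * (|v j| * eucNorm (g j)) := by rw [abs_mul, mul_assoc]
    _ ≤ (v j ^ 2 + truncLevel n L s) * (|v j| * eucNorm (g j)) := by
      gcongr
      · exact mul_nonneg (abs_nonneg _) (eucNorm_nonneg _)
      · exact hg.abs_weight_le j
    _ = |v j| ^ 3 * eucNorm (g j) + truncLevel n L s * (|v j| * eucNorm (g j)) := by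
      rw [← sq_abs (v j)]
      ring
    _ ≤ 2 ^ 28 * η := by
      linarith [hg.abs_cube_mul_eucNorm_le H hd j, H.sq_mul_add_le j, H.truncLevel_sq_le_mul_eta,
        H.eta_pos]

lemma eucNorm_row_le (H : EtaBounds n s v L η)
    (hg : GoodRows n s v L (truncLevel n L s) (2 ^ 16 * η) g) (hd : d ≤ n) (hn : n ≤ N)
    (j : Fin N) :
    eucNorm (g j) ≤ 4 * √(L * s) * 4 ^ N := by
  have hL := H.one_le_L
  have bernoulli : 25 * (N : ℝ) ≤ 2 * 16 ^ N := by
    have := one_add_mul_le_pow (a := (15 : ℝ)) (by norm_num) N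
    norm_num at this
    linarith [N.cast_nonneg (α := ℝ)]
  have n_le : (n : ℝ) ≤ N := by exact_mod_cast hn
  refine le_of_sq_le_sq ?_ (by positivity)
  calc eucNorm (g j) ^ 2 ≤ 100 * (n + L) * s :=
        hg.eucNorm_row_sq_le_add hd (zero_le_one.trans hL) j
    _ ≤ 100 * (2 * (n * L)) * s := by gcongr; exact H.add_le
    _ ≤ 100 * (2 * (N * L)) * s := by gcongr
    _ = 8 * (25 * N) * (L * s) := by ring
    _ ≤ 8 * (2 * 16 ^ N) * (L * s) := by gcongr
    _ = (4 * √(L * s) * 4 ^ N) ^ 2 := by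
      rw [mul_pow, mul_pow, Real.sq_sqrt (by positivity), ← pow_mul, mul_comm N, pow_mul]
      norm_num
      ring

lemma isSmallPerturbation (H : EtaBounds n s v L η)
    (hg : GoodRows n s v L (truncLevel n L s) (2 ^ 16 * η) g) (hd : d ≤ n) (hn : n ≤ N) :
    IsSmallPerturbation s v g (∑ i, v i ^ 4 - 3 * s) (2 ^ 28 * η) (4 * √(L * s)) where
  diag_le := by
    rw [sum_weight_mul_sq_sub]
    linarith [hg.diag_le, H.eta_pos]
  cross_le := by linarith [hg.cross_le, H.eta_pos]
  rest_le := hg.eucNorm_restMat_mulVec_le_eta H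
  weight_mul_sq_le j := calc
    |weight s (v j) (g j)| * eucNorm (g j) ^ 2
        ≤ (v j ^ 2 + truncLevel n L s) * (n * s + truncLevel n L s) := by
      have := hg.eucNorm_row_sq_le hd j
      exact mul_le_mul (hg.abs_weight_le j) this (sq_nonneg _)
        ((abs_nonneg _).trans (hg.abs_weight_le j))
    _ ≤ 2 ^ 28 * η := by linarith [H.sq_add_mul_le j, H.eta_pos]
  weight_mul_le := hg.abs_weight_mul_mul_eucNorm_le H hd
  loo_le := hg.loo_le
  row_le := hg.eucNorm_row_le H hd hn

end GoodRows
end EtaBounds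

/-! ### The error level `η` and the failure probability -/

section ErrorLevel

variable {N n k : ℕ} {v : Fin N → ℝ} {δ L η : ℝ}

lemma lpNorm_nonneg (p : ℝ) (x : Fin k → ℝ) : 0 ≤ lpNorm p x := by
  unfold _root_.lpNorm
  positivity

lemma lpNorm_pow_of_even {p : ℕ} (hp : Even p) (hp0 : p ≠ 0) (x : Fin k → ℝ) :
    lpNorm p x ^ p = ∑ i, x i ^ p := by
  unfold _root_.lpNorm
  simp only [Real.rpow_natCast, one_div, hp.pow_abs]
  exact Real.rpow_inv_natCast_pow (Finset.sum_nonneg fun i _ => hp.pow_nonneg (x i)) hp0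

lemma lpNorm_four_pow (x : Fin k → ℝ) : lpNorm 4 x ^ 4 = ∑ i, x i ^ 4 := by
  exact_mod_cast lpNorm_pow_of_even (p := 4) (by decide) four_ne_zero x

lemma lpNorm_six_pow (x : Fin k → ℝ) : lpNorm 6 x ^ 6 = ∑ i, x i ^ 6 := by
  exact_mod_cast lpNorm_pow_of_even (p := 6) (by decide) (by norm_num) x

lemma sq_le_supNorm_sq (x : Fin k → ℝ) (i : Fin k) : x i ^ 2 ≤ supNorm x ^ 2 := by
  rw [← sq_abs]
  gcongr
  exact le_ciSup (f := fun i => |x i|) (Set.finite_range _).bddAbove i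

lemma rpow_three_halves_sq {a : ℝ} (ha : 0 ≤ a) : (a ^ ((3 : ℝ) / 2)) ^ 2 = a ^ 3 := by
  rw [← Real.rpow_natCast, ← Real.rpow_mul ha]
  norm_num

lemma euclidean_summand_sq (hL : 0 ≤ L) :
    ((eucNorm v + 1) * n * √L / (N : ℝ) ^ ((3 : ℝ) / 2)) ^ 2 =
      (eucNorm v + 1) ^ 2 * (n ^ 2 * L * (N : ℝ)⁻¹ ^ 3) := by
  rw [div_pow, rpow_three_halves_sq N.cast_nonneg, mul_pow, mul_pow, Real.sq_sqrt hL, inv_pow]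
  ring

lemma l4_summand_sq (hL : 0 ≤ L) :
    (lpNorm 4 v ^ 2 * √(n * L) / N) ^ 2 = n * L * (∑ i, v i ^ 4) * (N : ℝ)⁻¹ ^ 2 := by
  rw [← lpNorm_four_pow, div_pow, mul_pow, Real.sq_sqrt (by positivity)]
  ring

lemma le_l6_summand_sq (hL : 0 ≤ L) :
    (n + L) * (∑ i, v i ^ 6) * (N : ℝ)⁻¹ ≤ (lpNorm 6 v ^ 3 * (√n + √L) / √N) ^ 2 := by
  have add_le_sq : n + L ≤ (√n + √L) ^ 2 := by
    rw [add_sq, Real.sq_sqrt n.cast_nonneg, Real.sq_sqrt hL]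
    have : 0 ≤ 2 * √n * √L := by positivity
    linarith
  calc (n + L) * (∑ i, v i ^ 6) * (N : ℝ)⁻¹ = (n + L) * lpNorm 6 v ^ 6 * (N : ℝ)⁻¹ := by
        rw [lpNorm_six_pow]
    _ ≤ (√n + √L) ^ 2 * lpNorm 6 v ^ 6 * (N : ℝ)⁻¹ := by gcongr
    _ = (lpNorm 6 v ^ 3 * (√n + √L) / √N) ^ 2 := by
      rw [div_pow, mul_pow, Real.sq_sqrt N.cast_nonneg]
      ring

lemma cubic_summand_sq (hL : 0 ≤ L) :
    ((n * L) ^ ((3 : ℝ) / 2) / (N : ℝ) ^ 2) ^ 2 = (n * L) ^ 3 * (N : ℝ)⁻¹ ^ 4 := by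
  rw [div_pow, rpow_three_halves_sq (by positivity)]
  ring

lemma etaBounds_etaBound (v : Fin N → ℝ) (hN : 1 ≤ N) (hn : 1 ≤ n)
    (hL : 1 ≤ Real.log (N / δ)) (hL7 : Real.log (N / δ) ^ 7 ≤ N) :
    EtaBounds n (N : NNReal)⁻¹ v (Real.log (N / δ)) (etaBound 1 N n v δ) := by
  have hN0 : (0 : ℝ) < N := by exact_mod_cast hN
  have coe_inv : (((N : NNReal)⁻¹ : NNReal) : ℝ) = (N : ℝ)⁻¹ := by simp
  have euc_nonneg := eucNorm_nonneg v
  have six_nonneg := lpNorm_nonneg 6 v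
  unfold etaBound
  set L := Real.log (N / δ)
  rw [one_mul]
  have hL0 : 0 ≤ L := zero_le_one.trans hL
  have h₁ : 0 ≤ (eucNorm v + 1) * n * √L / (N : ℝ) ^ ((3 : ℝ) / 2) := by positivity
  have h₂ : 0 ≤ lpNorm 4 v ^ 2 * √(n * L) / N := by positivity
  have h₃ : 0 ≤ lpNorm 6 v ^ 3 * (√n + √L) / √N := by positivity
  have h₄ : 0 ≤ supNorm v ^ 2 * (n * L + L ^ 2) / N := by positivity
  have h₅ : 0 ≤ (n * L) ^ ((3 : ℝ) / 2) / (N : ℝ) ^ 2 := by positivity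
  have h₆ : 0 ≤ |eucNorm v ^ 2 - 1| / (N : ℝ) := by positivity
  refine ⟨by positivity, hn, hL, ?_, ?_, ?_, ?_, ?_, fun i => ?_, ?_, ?_⟩ <;> rw [coe_inv]
  · rw [← div_eq_mul_inv, div_le_one hN0]
    exact (pow_le_pow_right₀ hL (by norm_num)).trans hL7
  · refine le_trans ?_ ((euclidean_summand_sq hL0).symm.trans_le
      (pow_le_pow_left₀ h₁ (by linarith) 2))
    exact le_mul_of_one_le_left (by positivity) (one_le_pow₀ (by linarith))
  · refine le_trans ?_ ((euclidean_summand_sq hL0).symm.trans_le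
      (pow_le_pow_left₀ h₁ (by linarith) 2))
    rw [← eucNorm_sq, mul_right_comm, mul_comm]
    gcongr
    linarith
  · exact (l4_summand_sq hL0).symm.trans_le (pow_le_pow_left₀ h₂ (by linarith) 2)
  · exact (le_l6_summand_sq hL0).trans (pow_le_pow_left₀ h₃ (by linarith) 2)
  · have : v i ^ 2 * (n * L + L ^ 2) / N ≤ supNorm v ^ 2 * (n * L + L ^ 2) / N := by
      gcongr ?_ * _ / _
      exact sq_le_supNorm_sq v i
    rw [← div_eq_mul_inv]
    linarith
  · exact (cubic_summand_sq hL0).symm.trans_le (pow_le_pow_left₀ h₅ (by linarith) 2)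
  · rw [← eucNorm_sq, ← div_eq_mul_inv]
    linarith

lemma one_le_log_div (hN : 5 ≤ N) (hδ : 0 < δ) (hδ1 : δ < 1) : 1 ≤ Real.log (N / δ) := by
  have hN5 : (5 : ℝ) ≤ N := by exact_mod_cast hN
  have le_div : (N : ℝ) ≤ N / δ := le_div_self N.cast_nonneg hδ hδ1.le
  rw [Real.le_log_iff_exp_le (by linarith)]
  linarith [Real.exp_one_lt_d9]

lemma exp_neg_four_mul_log_div (hN : 0 < N) (hδ : 0 < δ) :
    Real.exp (-(4 * Real.log (N / δ))) = (δ / N) ^ 4 := by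
  rw [← mul_neg, ← Real.log_inv, inv_div]
  exact (Real.exp_nat_mul _ 4).trans (by rw [Real.exp_log (by positivity)])

lemma two_mul_exp_le_inv (hN : 5 ≤ N) (hδ : 0 < δ) (hδ1 : δ < 1) :
    2 * Real.exp (-(4 * Real.log (N / δ))) ≤ (N : ℝ)⁻¹ := by
  have hN5 : (5 : ℝ) ≤ N := by exact_mod_cast hN
  have cube_ge : (2 : ℝ) ≤ N ^ 3 := by
    linarith [pow_le_pow_left₀ (by norm_num) hN5 3]
  rw [exp_neg_four_mul_log_div (by omega) hδ, div_pow, mul_div_assoc',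
    div_le_iff₀ (by positivity)]
  calc 2 * δ ^ 4 ≤ 2 * 1 := by gcongr; exact pow_le_one₀ hδ.le hδ1.le
    _ ≤ N ^ 3 := by linarith
    _ = (N : ℝ)⁻¹ * N ^ 4 := by field_simp

lemma union_bound_le (hN : 5 ≤ N) (hδ : 0 < δ) (hδ1 : δ < 1) :
    (N + N ^ 2 + 7) * (2 * Real.exp (-(4 * Real.log (N / δ)))) ≤ δ := by
  have hN5 : (5 : ℝ) ≤ N := by exact_mod_cast hN
  have sq_ge : (25 : ℝ) ≤ N ^ 2 := by linarith [pow_le_pow_left₀ (by norm_num) hN5 2]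
  have count_le : ((N : ℝ) + N ^ 2 + 7) * 2 ≤ N ^ 4 := by
    nlinarith [mul_le_mul_of_nonneg_right sq_ge (sq_nonneg (N : ℝ))]
  rw [exp_neg_four_mul_log_div (by omega) hδ, div_pow, mul_div_assoc', mul_div_assoc',
    div_le_iff₀ (by positivity)]
  calc (N + N ^ 2 + 7) * (2 * δ ^ 4) = (N + N ^ 2 + 7) * 2 * δ ^ 4 := by ring
    _ ≤ N ^ 4 * δ := by
      gcongr
      exact pow_le_of_le_one hδ.le hδ1.le four_ne_zero
    _ = δ * N ^ 4 := mul_comm _ _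

end ErrorLevel

section HighProbability

variable {N d n : ℕ} {v : Fin N → ℝ} {δ L η : ℝ}

instance isProbabilityMeasure_iidGaussVec (σ2 : NNReal) :
    IsProbabilityMeasure (iidGaussVec N d σ2) := by
  unfold iidGaussVec
  infer_instance

lemma ofReal_one_sub_le_measure {Ω : Type*} [MeasurableSpace Ω] {μ : Measure Ω}
    [IsProbabilityMeasure μ] {p : Ω → Prop} (hδ : 0 ≤ δ)
    (h : μ {x | ¬ p x} ≤ ENNReal.ofReal δ) : ENNReal.ofReal (1 - δ) ≤ μ {x | p x} := by
  rw [ENNReal.ofReal_sub _ hδ, ENNReal.ofReal_one, tsub_le_iff_right, ← measure_univ (μ := μ)]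
  calc μ Set.univ ≤ μ ({x | p x} ∪ {x | ¬ p x}) := measure_mono fun x _ => Classical.em (p x)
    _ ≤ μ {x | p x} + μ {x | ¬ p x} := measure_union_le _ _
    _ ≤ μ {x | p x} + ENNReal.ofReal δ := by gcongr

lemma GoodRows.exists_sign_entrywise_le {g : Fin N → Fin d → ℝ} {u : Fin (d + 1) → ℝ}
    {Q : Matrix (Fin (d + 1)) (Fin (d + 1)) ℝ}
    (H : EtaBounds (d + 1) (N : NNReal)⁻¹ v L η)
    (hg : GoodRows (d + 1) (N : NNReal)⁻¹ v L (truncLevel (d + 1) L (N : ℝ)⁻¹) (2 ^ 16 * η) g)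
    (hn : d + 1 ≤ N) (hη : η ≤ (64 * 2 ^ 28)⁻¹ * |lpNorm 4 v ^ 4 - 3 / N|) (hQ : Qᵀ * Q = 1)
    (hu : IsLeadingEigen (specMat (gaussBasis (n := d + 1) v g * Q)) u) :
    ∃ σ : ℝ, (σ = 1 ∨ σ = -1) ∧ ∀ j, |lpNorm 4 v ^ 4 - 3 / N| *
        |σ * ((gaussBasis (n := d + 1) v g * Q) *ᵥ u) j - v j| ≤
      80 * 2 ^ 28 * η * (|v j| + √L / √N) := by
  have coe_inv : (((N : NNReal)⁻¹ : NNReal) : ℝ) = (N : ℝ)⁻¹ := by simp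
  have hη0 := H.eta_pos
  rw [lpNorm_four_pow, div_eq_mul_inv] at hη ⊢
  rw [← coe_inv] at hg
  have small := hg.isSmallPerturbation H d.le_succ hn
  rw [coe_inv] at small
  have gap : 64 * (2 ^ 28 * η) ≤ |∑ i, v i ^ 4 - 3 * (N : ℝ)⁻¹| := by
    rwa [inv_mul_eq_div, le_div_iff₀' (by positivity), mul_assoc] at hη
  have gap_ne : ∑ i, v i ^ 4 - 3 * (N : ℝ)⁻¹ ≠ 0 := abs_pos.1 (gap.trans_lt' (by positivity))
  rw [specMat_mul_orthogonal _ hQ] at hu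
  obtain ⟨σ, hσ, bound⟩ :=
    small.exists_sign_entrywise_le gap gap_ne (isLeadingEigen_of_conj hQ hu)
  refine ⟨σ, hσ, fun j => ?_⟩
  rw [← mulVec_mulVec]
  refine (bound j).trans ?_
  rw [← div_eq_mul_inv, Real.sqrt_div' _ N.cast_nonneg]
  have : 0 ≤ 2 ^ 28 * η * |v j| := by positivity
  linarith

lemma iidGaussVec_not_goodRows_le (H : EtaBounds n (N : NNReal)⁻¹ v (Real.log (N / δ)) η)
    (hN : 5 ≤ N) (hd : d ≤ n) (hδ : 0 < δ) (hδ1 : δ < 1) :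
    iidGaussVec N d (N : NNReal)⁻¹ {g | ¬ GoodRows n (N : NNReal)⁻¹ v (Real.log (N / δ))
      (truncLevel n (Real.log (N / δ)) (N : ℝ)⁻¹) (2 ^ 16 * η) g} ≤ ENNReal.ofReal δ := by
  have hN0 : (N : ℝ) ≠ 0 := by exact_mod_cast (by omega : N ≠ 0)
  have coe_inv : (((N : NNReal)⁻¹ : NNReal) : ℝ) = (N : ℝ)⁻¹ := by simp
  have hNs : (N : ℝ) * ((N : NNReal)⁻¹ : NNReal) = 1 := by rw [coe_inv, mul_inv_cancel₀ hN0]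
  have small := two_mul_exp_le_inv hN hδ hδ1
  rw [← coe_inv] at small ⊢
  exact ((H.scales hNs).measure_not_goodRows_le hNs hd small).trans
    (ENNReal.ofReal_le_ofReal (union_bound_le hN hδ hδ1))

end HighProbability

end GaussBasis

open GaussBasis

/-- entrywise error bound for the spectral estimator, Gaussian basis: in the
Gaussian-basis model `Ỹ = YQ`, with `M̃` the spectral matrix of `Ỹ` and `ũ` its unit leading
eigenvector, there are a universal constant `C₀ > 0` (defining `η`), universal constants
`c > 0`, `C > 0`, and an absolute constant `N₀`, such that for any `δ ∈ (0,1)` with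
`N ≥ log⁷(N/δ)` and `η ≤ c |‖v‖₄⁴ - 3/N|`, with probability at least `1 - δ`, there is a
single sign `s ∈ {±1}` with, for all `j ∈ [N]`,
`|‖v‖₄⁴ - 3/N| · |s ỹ_jᵀũ - v_j| ≤ C η (|v_j| + √(log(N/δ))/√N)`. -/
theorem stmt_7 :
    ∃ C₀ : ℝ, 0 < C₀ ∧ ∃ c : ℝ, 0 < c ∧ ∃ C : ℝ, 0 < C ∧ ∃ N₀ : ℕ,
      ∀ (N n : ℕ) (v : Fin N → ℝ) (δ : ℝ), N₀ ≤ N → 1 ≤ n → n ≤ N → 0 < δ → δ < 1 →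
        (Real.log (N / δ)) ^ 7 ≤ N →
        etaBound C₀ N n v δ ≤ c * |lpNorm 4 v ^ 4 - 3 / N| →
        ∀ Q : Matrix (Fin n) (Fin n) ℝ, Qᵀ * Q = 1 →
        ENNReal.ofReal (1 - δ) ≤
          (iidGaussVec N (n - 1) ((N : NNReal))⁻¹)
            {B | ∀ u : Fin n → ℝ, IsLeadingEigen (specMat (gaussBasis v B * Q)) u →
              ∃ s : ℝ, (s = 1 ∨ s = -1) ∧ ∀ j : Fin N,
                |lpNorm 4 v ^ 4 - 3 / N|
                    * |s * (gaussBasis v B * Q).mulVec u j - v j|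
                  ≤ C * etaBound C₀ N n v δ
                      * (|v j| + Real.sqrt (Real.log (N / δ)) / Real.sqrt N)} := by
  refine ⟨1, one_pos, (64 * 2 ^ 28)⁻¹, by positivity, 80 * 2 ^ 28, by positivity, 5, ?_⟩
  intro N n v δ hN hn hnN hδ hδ1 hL7 hη Q hQ
  obtain ⟨d, rfl⟩ : ∃ d, n = d + 1 := ⟨n - 1, by omega⟩
  have H := etaBounds_etaBound v (by omega) hn (one_le_log_div hN hδ hδ1) hL7
  have goodRows_prob := ofReal_one_sub_le_measure hδ.le
    (iidGaussVec_not_goodRows_le H hN d.le_succ hδ hδ1)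
  refine goodRows_prob.trans (measure_mono fun g hg u hu => ?_)
  exact GoodRows.exists_sign_entrywise_le H hg hnN hη hQ hu
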